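/- arXiv:hep-th/9404042 — 9 statements merged into one kernel-verified Lean document; each statement's English description precedes it below -/
import Mathlib

section
/- Let n, m, n', m', p, q, p', q' be integers and let τ₁₁, τ₁₂, τ₂₂, U₁, U₂, ω, ω', r, s be complex numbers with ω ≠ 0, ω' ≠ 0, r·U₁ ≠ 0 and s·U₂ ≠ 0. Assume the ellipticity relations 2U₁ω = r(n + p'τ₁₁ + q'τ₁₂), 2U₁ω' = r(m + p'τ₁₂ + q'τ₂₂), 2U₂ω = s(n' + pτ₁₁ + qτ₁₂), 2U₂ω' = s(m' + pτ₁₂ + qτ₂₂). Then α·τ₁₁ + β·τ₁₂ + γ·τ₂₂ + δ·(τ₁₂² − τ₁₁τ₂₂) + ε = 0, where α = m'p' − mp, β = np − mq + m'q' − n'p', γ = nq − n'q', δ = pq' − p'q and ε = nm' − mn'. (This is the elimination step in the necessity part of the Main Theorem: the period matrix of a two-gap elliptic potential lies on a Humbert surface.) -/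
/-- **Humbert surface relation (elimination step in the necessity part of the Main
Theorem).** If the winding vectors and periods of a two-gap elliptic potential satisfy the
ellipticity relations, then the period matrix `τ` lies on the Humbert surface
`α·τ₁₁ + β·τ₁₂ + γ·τ₂₂ + δ·(τ₁₂² − τ₁₁τ₂₂) + ε = 0` with
`α = m'p' − mp`, `β = np − mq + m'q' − n'p'`, `γ = nq − n'q'`, `δ = pq' − p'q`,
`ε = nm' − mn'`. -/
theorem humbert_relation_of_elliptic
    (n m n' m' p q p' q' : ℤ) (τ11 τ12 τ22 U1 U2 ω ω' r s : ℂ)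
    (hω : ω ≠ 0) (hω' : ω' ≠ 0) (hrU1 : r * U1 ≠ 0) (hsU2 : s * U2 ≠ 0)
    (h1 : 2 * U1 * ω = r * ((n : ℂ) + (p' : ℂ) * τ11 + (q' : ℂ) * τ12))
    (h2 : 2 * U1 * ω' = r * ((m : ℂ) + (p' : ℂ) * τ12 + (q' : ℂ) * τ22))
    (h3 : 2 * U2 * ω = s * ((n' : ℂ) + (p : ℂ) * τ11 + (q : ℂ) * τ12))
    (h4 : 2 * U2 * ω' = s * ((m' : ℂ) + (p : ℂ) * τ12 + (q : ℂ) * τ22)) :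
    ((m' * p' - m * p : ℤ) : ℂ) * τ11
      + ((n * p - m * q + m' * q' - n' * p' : ℤ) : ℂ) * τ12
      + ((n * q - n' * q' : ℤ) : ℂ) * τ22
      + ((p * q' - p' * q : ℤ) : ℂ) * (τ12 ^ 2 - τ11 * τ22)
      + ((n * m' - m * n' : ℤ) : ℂ) = 0 := by
  have hr : r ≠ 0 := left_ne_zero_of_mul hrU1
  have hs : s ≠ 0 := left_ne_zero_of_mul hsU2
  apply mul_left_cancel₀ (mul_ne_zero hr hs)
  push_cast
  linear_combination (-(s * ((m' : ℂ) + (p : ℂ) * τ12 + (q : ℂ) * τ22))) * h1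
    - 2 * U1 * ω * h4
    + (s * ((n' : ℂ) + (p : ℂ) * τ11 + (q : ℂ) * τ12)) * h2 + 2 * U1 * ω' * h3
end

section
/- Let N ≥ 1 be an integer, ω, ω' nonzero complex numbers with Im(ω'/ω) > 0, τ̃ a complex number with Im τ̃ > 0, and (α, β) ∈ ℂ². Let τ = (1/N)·((ω'/ω, 1), (1, τ̃)), a symmetric 2×2 matrix with positive definite imaginary part, and define F(x) = θ[0]((x/(2ω) + α, β) | τ), where [0] is the zero characteristic. Then the function f(x) = −2·d²/dx² log F(x) is doubly periodic with periods 2ω and 2ω': for every x at which F(x) ≠ 0, F(x + 2ω) ≠ 0 and F(x + 2ω') ≠ 0, one has f(x + 2ω) = f(x) and f(x + 2ω') = f(x). (This is the periodicity assertion of the paper's Lemma: f is an elliptic function with primitive periods 2ω, 2ω'.) -/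
/-- Genus-2 Riemann theta function with characteristic `[a b; c d]`
(`(a,b) = ε'`, `(c,d) = ε''`), evaluated at `z = (z1, z2)` and period matrix
`τ = ((t11, t12), (t12, t22))`. -/
noncomputable def theta2 (a b c d : ℝ) (z1 z2 t11 t12 t22 : ℂ) : ℂ :=
  ∑' m : ℤ × ℤ,
    Complex.exp
      ((Real.pi : ℂ) * Complex.I *
          (((m.1 : ℂ) + (a : ℂ) / 2) *
              (((m.1 : ℂ) + (a : ℂ) / 2) * t11 + ((m.2 : ℂ) + (b : ℂ) / 2) * t12) +
            ((m.2 : ℂ) + (b : ℂ) / 2) *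
              (((m.1 : ℂ) + (a : ℂ) / 2) * t12 + ((m.2 : ℂ) + (b : ℂ) / 2) * t22)) +
        2 * (Real.pi : ℂ) * Complex.I *
          (((m.1 : ℂ) + (a : ℂ) / 2) * (z1 + (c : ℂ) / 2) +
            ((m.2 : ℂ) + (b : ℂ) / 2) * (z2 + (d : ℂ) / 2)))

lemma theta2_zero_term (z1 z2 s t : ℂ) (r : ℝ) (m : ℤ × ℤ) :
    Complex.exp
      ((Real.pi : ℂ) * Complex.I *
          (((m.1 : ℂ) + ((0 : ℝ) : ℂ) / 2) *
              (((m.1 : ℂ) + ((0 : ℝ) : ℂ) / 2) * s + ((m.2 : ℂ) + ((0 : ℝ) : ℂ) / 2) * (r : ℂ)) +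
            ((m.2 : ℂ) + ((0 : ℝ) : ℂ) / 2) *
              (((m.1 : ℂ) + ((0 : ℝ) : ℂ) / 2) * (r : ℂ) + ((m.2 : ℂ) + ((0 : ℝ) : ℂ) / 2) * t)) +
        2 * (Real.pi : ℂ) * Complex.I *
          (((m.1 : ℂ) + ((0 : ℝ) : ℂ) / 2) * (z1 + ((0 : ℝ) : ℂ) / 2) +
            ((m.2 : ℂ) + ((0 : ℝ) : ℂ) / 2) * (z2 + ((0 : ℝ) : ℂ) / 2))) =
    jacobiTheta₂_term m.1 z1 s * jacobiTheta₂_term m.2 z2 t *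
      Complex.exp (((2 * Real.pi * m.1 * m.2 * r : ℝ) : ℂ) * Complex.I) := by
  rw [jacobiTheta₂_term, jacobiTheta₂_term, ← Complex.exp_add, ← Complex.exp_add]
  congr 1
  push_cast
  ring

lemma theta2_zero_eq (z1 z2 s t : ℂ) (r : ℝ) :
    theta2 0 0 0 0 z1 z2 s (r : ℂ) t = ∑' m : ℤ × ℤ,
      jacobiTheta₂_term m.1 z1 s * jacobiTheta₂_term m.2 z2 t *
      Complex.exp (((2 * Real.pi * m.1 * m.2 * r : ℝ) : ℂ) * Complex.I) := by
  unfold theta2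
  exact tsum_congr (theta2_zero_term z1 z2 s t r)

lemma theta2_differentiable (z2 s t : ℂ) (r : ℝ) (hs : 0 < s.im) (ht : 0 < t.im) :
    Differentiable ℂ (fun z1 => theta2 0 0 0 0 z1 z2 s (r : ℂ) t) := by
  simp_rw [theta2_zero_eq]
  intro z
  have hU : IsOpen {w : ℂ | |w.im| < |z.im| + 1} :=
    isOpen_lt (by fun_prop) continuous_const
  refine (Complex.differentiableOn_tsum_of_summable_norm
    (u := fun m : ℤ × ℤ => Real.exp (-Real.pi * (s.im * m.1 ^ 2 - 2 * (|z.im| + 1) * |m.1|)) *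
      Real.exp (-Real.pi * (t.im * m.2 ^ 2 - 2 * |z2.im| * |m.2|))) ?_ ?_ hU ?_).differentiableAt
      (hU.mem_nhds (by simp))
  · have h1 := summable_pow_mul_jacobiTheta₂_term_bound (|z.im| + 1) hs 0
    have h2 := summable_pow_mul_jacobiTheta₂_term_bound |z2.im| ht 0
    simp only [pow_zero, one_mul] at h1 h2
    exact h1.mul_of_nonneg h2 (fun _ => (Real.exp_pos _).le) (fun _ => (Real.exp_pos _).le)
  · intro m
    unfold jacobiTheta₂_term
    fun_prop
  · intro m w hw
    rw [norm_mul, norm_mul, Complex.norm_exp_ofReal_mul_I, mul_one]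
    exact mul_le_mul (norm_jacobiTheta₂_term_le hs (le_of_lt hw) le_rfl _)
      (norm_jacobiTheta₂_term_le ht le_rfl le_rfl _) (norm_nonneg _) (Real.exp_pos _).le

lemma theta2_add_one (z1 z2 s t : ℂ) (r : ℝ) :
    theta2 0 0 0 0 (z1 + 1) z2 s (r : ℂ) t = theta2 0 0 0 0 z1 z2 s (r : ℂ) t := by
  rw [theta2_zero_eq, theta2_zero_eq]
  refine tsum_congr fun m => ?_
  congr 2
  unfold jacobiTheta₂_term
  rw [Complex.exp_eq_exp_iff_exists_int]
  exact ⟨m.1, by ring⟩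

lemma theta2_add_tau (N : ℕ) (hN : 1 ≤ N) (z1 z2 s t : ℂ) :
    theta2 0 0 0 0 z1 z2 s ((1 / (N : ℝ) : ℝ) : ℂ) t =
    Complex.exp (Real.pi * Complex.I * N ^ 2 * s + 2 * Real.pi * Complex.I * N * z1) *
      theta2 0 0 0 0 (z1 + N * s) z2 s ((1 / (N : ℝ) : ℝ) : ℂ) t := by
  have hN0 : (N : ℂ) ≠ 0 := by exact_mod_cast (by omega : N ≠ 0)
  rw [theta2_zero_eq, theta2_zero_eq, ← tsum_mul_left,
    ← (Equiv.prodCongr (Equiv.addRight (N : ℤ)) (Equiv.refl ℤ)).tsum_eq]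
  refine tsum_congr fun m => ?_
  simp only [jacobiTheta₂_term, ← Complex.exp_add]
  rw [Complex.exp_eq_exp_iff_exists_int]
  refine ⟨m.2, ?_⟩
  simp only [Equiv.prodCongr_apply, Prod.map, Equiv.coe_addRight, Equiv.refl_apply]
  push_cast
  field_simp
  ring

lemma logderiv_shift (F : ℂ → ℂ) (hF : Differentiable ℂ F) (a b p : ℂ)
    (h : ∀ x, F x = Complex.exp (a + b * x) * F (x + p)) (x : ℂ) (hx : F x ≠ 0) :
    F (x + p) ≠ 0 ∧ -2 * deriv (fun y => deriv F y / F y) (x + p) =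
      -2 * deriv (fun y => deriv F y / F y) x := by
  have hne : ∀ y, F y ≠ 0 → F (y + p) ≠ 0 := by
    intro y hy h0
    apply hy
    rw [h, h0, mul_zero]
  refine ⟨hne x hx, ?_⟩
  rw [← deriv_comp_add_const (fun y => deriv F y / F y) p x]
  congr 1
  have hev : (fun y => deriv F y / F y) =ᶠ[nhds x]
      fun y => b + deriv F (y + p) / F (y + p) := by
    filter_upwards [hF.continuous.continuousAt.eventually_ne hx] with y hy
    have hd : HasDerivAt (fun x => Complex.exp (a + b * x) * F (x + p))
        (Complex.exp (a + b * y) * b * F (y + p) + Complex.exp (a + b * y) * deriv F (y + p)) y := by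
      have h1 : HasDerivAt (fun x => Complex.exp (a + b * x)) (Complex.exp (a + b * y) * b) y := by
        have := ((hasDerivAt_id y).const_mul b).const_add a
        simpa using this.cexp
      exact h1.mul ((hF (y + p)).hasDerivAt.comp_add_const y p)
    have hd' := hd.deriv
    rw [← (funext h : F = fun x => Complex.exp (a + b * x) * F (x + p))] at hd'
    rw [hd', h y]
    have := hne y hy
    have := Complex.exp_ne_zero (a + b * y)
    field_simp
  rw [hev.deriv_eq, deriv_const_add]

/-- **Periodicity assertion of the Lemma.** For `τ = (1/N)·((ω'/ω, 1), (1, τ̃))` and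
`F(x) = θ[0]((x/(2ω) + α, β) | τ)`, the function `f(x) = −2 (log F)''(x)` is doubly
periodic with periods `2ω` and `2ω'`: wherever `F(x) ≠ 0`, also `F(x + 2ω) ≠ 0` and
`F(x + 2ω') ≠ 0`, and `f(x + 2ω) = f(x)`, `f(x + 2ω') = f(x)`. -/
theorem elliptic_potential_doubly_periodic
    (N : ℕ) (hN : 1 ≤ N) (ω ω' : ℂ) (hω : ω ≠ 0) (hω' : ω' ≠ 0)
    (hτ : 0 < (ω' / ω).im) (τ' : ℂ) (hτ' : 0 < τ'.im) (α β : ℂ) :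
    let F : ℂ → ℂ := fun x =>
      theta2 0 0 0 0 (x / (2 * ω) + α) β ((ω' / ω) / N) (1 / N) (τ' / N)
    let f : ℂ → ℂ := fun x => -2 * deriv (fun y => deriv F y / F y) x
    ∀ x : ℂ, F x ≠ 0 →
      F (x + 2 * ω) ≠ 0 ∧ F (x + 2 * ω') ≠ 0 ∧
        f (x + 2 * ω) = f x ∧ f (x + 2 * ω') = f x := by
  intro F f x hx
  have hN0 : (N : ℂ) ≠ 0 := by exact_mod_cast (by omega : N ≠ 0)
  have hNp : (0 : ℝ) < N := by exact_mod_cast hN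
  have hr : (1 / N : ℂ) = ((1 / (N : ℝ) : ℝ) : ℂ) := by push_cast; rfl
  have hFd : Differentiable ℂ F := by
    have h1 : 0 < ((ω' / ω) / N).im := by
      rw [Complex.div_natCast_im]; positivity
    have h2 : 0 < (τ' / N).im := by
      rw [Complex.div_natCast_im]; positivity
    have := theta2_differentiable β _ _ (1 / (N : ℝ)) h1 h2
    rw [← hr] at this
    exact this.comp (g := fun z1 => theta2 0 0 0 0 z1 β ((ω' / ω) / N) (1 / N) (τ' / N))
      (f := fun x => x / (2 * ω) + α) (by fun_prop)
  have A := logderiv_shift F hFd 0 0 (2 * ω) (by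
    intro y
    have e : (y + 2 * ω) / (2 * ω) + α = (y / (2 * ω) + α) + 1 := by field_simp; ring
    simp only [F, e, hr, theta2_add_one]
    simp) x hx
  have B := logderiv_shift F hFd
    (Real.pi * Complex.I * N ^ 2 * ((ω' / ω) / N) + 2 * Real.pi * Complex.I * N * α)
    (2 * Real.pi * Complex.I * N / (2 * ω)) (2 * ω') (by
    intro y
    have e : (y + 2 * ω') / (2 * ω) + α = (y / (2 * ω) + α) + N * ((ω' / ω) / N) := by
      field_simp; ring
    simp only [F, e, hr]
    rw [theta2_add_tau N hN]
    congr 2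
    ring) x hx
  exact ⟨A.1, B.1, A.2, B.2⟩
end

section
/- Let τ be a symmetric 2×2 complex matrix with positive definite imaginary part, z ∈ ℂ², and write θ̂[ε](z) := θ[ε](z|2τ). Then the following four duplication identities hold: θ[00;00](0|τ)·θ[00;00](z|τ) = θ̂[00;00](z)² + θ̂[11;00](z)² + θ̂[10;00](z)² + θ̂[01;00](z)²; θ[00;11](0|τ)·θ[00;11](z|τ) = θ̂[00;00](z)² + θ̂[11;00](z)² − θ̂[10;00](z)² − θ̂[01;00](z)²; θ[00;10](0|τ)·θ[00;10](z|τ) = θ̂[00;00](z)² − θ̂[11;00](z)² − θ̂[10;00](z)² + θ̂[01;00](z)²; θ[00;01](0|τ)·θ[00;01](z|τ) = θ̂[00;00](z)² − θ̂[11;00](z)² + θ̂[10;00](z)² − θ̂[01;00](z)². -/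
/-- The symmetric matrix `τ = ((t11, t12), (t12, t22))` has positive definite
imaginary part. -/
def posDefIm (t11 t12 t22 : ℂ) : Prop :=
  (!![t11.im, t12.im; t12.im, t22.im]).PosDef

/-- The general term of the theta series. -/
noncomputable def thetaTerm (a b c d : ℝ) (z1 z2 t11 t12 t22 : ℂ) (m : ℤ × ℤ) : ℂ :=
    Complex.exp
      ((Real.pi : ℂ) * Complex.I *
          (((m.1 : ℂ) + (a : ℂ) / 2) *
              (((m.1 : ℂ) + (a : ℂ) / 2) * t11 + ((m.2 : ℂ) + (b : ℂ) / 2) * t12) +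
            ((m.2 : ℂ) + (b : ℂ) / 2) *
              (((m.1 : ℂ) + (a : ℂ) / 2) * t12 + ((m.2 : ℂ) + (b : ℂ) / 2) * t22)) +
        2 * (Real.pi : ℂ) * Complex.I *
          (((m.1 : ℂ) + (a : ℂ) / 2) * (z1 + (c : ℂ) / 2) +
            ((m.2 : ℂ) + (b : ℂ) / 2) * (z2 + (d : ℂ) / 2)))

lemma theta2_eq (a b c d : ℝ) (z1 z2 t11 t12 t22 : ℂ) :
    theta2 a b c d z1 z2 t11 t12 t22 = ∑' m, thetaTerm a b c d z1 z2 t11 t12 t22 m := rfl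

lemma norm_thetaTerm (a b c d : ℝ) (z1 z2 t11 t12 t22 : ℂ) (m : ℤ × ℤ) :
    ‖thetaTerm a b c d z1 z2 t11 t12 t22 m‖ =
      Real.exp (-Real.pi * (t11.im * (m.1 + a/2)^2 + 2 * t12.im * (m.1 + a/2) * (m.2 + b/2)
        + t22.im * (m.2 + b/2)^2)
        - 2 * Real.pi * ((m.1 + a/2) * z1.im + (m.2 + b/2) * z2.im)) := by
  unfold thetaTerm
  rw [Complex.norm_exp]
  congr 1
  have h1 : ((m.1 : ℂ) + (a : ℂ) / 2) = ((m.1 + a/2 : ℝ) : ℂ) := by push_cast; rfl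
  have h2 : ((m.2 : ℂ) + (b : ℂ) / 2) = ((m.2 + b/2 : ℝ) : ℂ) := by push_cast; rfl
  have h3 : (c : ℂ) / 2 = ((c/2 : ℝ) : ℂ) := by push_cast; rfl
  have h4 : (d : ℂ) / 2 = ((d/2 : ℝ) : ℂ) := by push_cast; rfl
  rw [h1, h2, h3, h4]
  generalize (m.1 + a/2 : ℝ) = x
  generalize (m.2 + b/2 : ℝ) = y
  simp
  ring

lemma summable_one_dim (δ : ℝ) (hδ : 0 < δ) (a y : ℝ) :
    Summable fun n : ℤ => Real.exp (-Real.pi * (δ * (n + a/2)^2) - 2 * Real.pi * ((n + a/2) * y)) := by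
  have h := (summable_jacobiTheta₂_term_iff (Complex.I * ((δ * a / 2 + y : ℝ) : ℂ))
    (Complex.I * (δ : ℂ))).2 (by simpa using hδ)
  have h' := h.norm.mul_left (Real.exp (-Real.pi * (δ * (a/2)^2) - Real.pi * a * y))
  refine h'.congr fun n => ?_
  rw [norm_jacobiTheta₂_term, ← Real.exp_add]
  congr 1
  simp
  ring

lemma posDefIm_bound {t11 t12 t22 : ℂ} (h : posDefIm t11 t12 t22) :
    ∃ δ : ℝ, 0 < δ ∧ ∀ x y : ℝ, δ * x^2 + δ * y^2 ≤
      t11.im * x^2 + 2 * t12.im * x * y + t22.im * y^2 := by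
  unfold posDefIm at h
  have hdet := h.det_pos
  have hA := h.diag_pos (i := 0)
  have hC := h.diag_pos (i := 1)
  simp [Matrix.det_fin_two] at hdet hA hC
  generalize t11.im = A at *
  generalize t12.im = B at *
  generalize t22.im = C at *
  have hAC : 0 < A + C := by linarith
  refine ⟨(A * C - B * B) / (A + C), by apply div_pos <;> linarith, fun x y => ?_⟩
  have : A * x^2 + 2 * B * x * y + C * y^2 -
      ((A * C - B * B) / (A + C) * x^2 + (A * C - B * B) / (A + C) * y^2)
      = ((A*x+B*y)^2 + (B*x+C*y)^2) / (A+C) := by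
    field_simp
    ring
  have h2 : 0 ≤ ((A*x+B*y)^2 + (B*x+C*y)^2) / (A+C) := by positivity
  linarith

lemma summable_thetaTerm (a b c d : ℝ) (z1 z2 : ℂ) {t11 t12 t22 : ℂ} (h : posDefIm t11 t12 t22) :
    Summable fun m => ‖thetaTerm a b c d z1 z2 t11 t12 t22 m‖ := by
  obtain ⟨δ, hδ, hb⟩ := posDefIm_bound h
  have hs := (summable_one_dim δ hδ a z1.im).mul_of_nonneg (summable_one_dim δ hδ b z2.im)
    (fun _ => (Real.exp_pos _).le) (fun _ => (Real.exp_pos _).le)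
  refine Summable.of_nonneg_of_le (fun _ => norm_nonneg _) (fun m => ?_) hs
  rw [norm_thetaTerm, ← Real.exp_add, Real.exp_le_exp]
  have := mul_le_mul_of_nonneg_left (hb (m.1 + a/2) (m.2 + b/2)) Real.pi_pos.le
  linarith

lemma posDefIm_two {t11 t12 t22 : ℂ} (h : posDefIm t11 t12 t22) :
    posDefIm (2*t11) (2*t12) (2*t22) := by
  unfold posDefIm at *
  have h2 := h.smul (show (0:ℝ) < 2 by norm_num)
  convert h2 using 1
  ext i j
  fin_cases i <;> fin_cases j <;> simp

/-- The change of summation variables `m = p - q`, `n = p + q + e`. -/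
def dupMap (x : (Fin 2 × Fin 2) × ((ℤ × ℤ) × (ℤ × ℤ))) : (ℤ × ℤ) × (ℤ × ℤ) :=
  ((x.2.1.1 - x.2.2.1, x.2.1.2 - x.2.2.2),
   (x.2.1.1 + x.2.2.1 + (x.1.1 : ℕ), x.2.1.2 + x.2.2.2 + (x.1.2 : ℕ)))

lemma dupMap_bijective : Function.Bijective dupMap := by
  constructor
  · rintro ⟨⟨e1, e2⟩, ⟨p1, p2⟩, ⟨q1, q2⟩⟩ ⟨⟨e1', e2'⟩, ⟨p1', p2'⟩, ⟨q1', q2'⟩⟩ h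
    simp only [dupMap, Prod.mk.injEq] at h
    simp only [Prod.mk.injEq, Fin.ext_iff]
    omega
  · rintro ⟨⟨m1, m2⟩, ⟨n1, n2⟩⟩
    refine ⟨⟨⟨⟨((n1 - m1) % 2).toNat, by omega⟩, ⟨((n2 - m2) % 2).toNat, by omega⟩⟩,
      ⟨m1 + (n1 - m1) / 2, m2 + (n2 - m2) / 2⟩, ⟨(n1 - m1) / 2, (n2 - m2) / 2⟩⟩, ?_⟩
    simp only [dupMap, Prod.mk.injEq]
    omega

lemma dup_term (c d : ℤ) (z1 z2 t11 t12 t22 : ℂ) (e : Fin 2 × Fin 2)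
    (x : (ℤ × ℤ) × (ℤ × ℤ)) :
    thetaTerm 0 0 c d 0 0 t11 t12 t22 (dupMap (e, x)).1 *
      thetaTerm 0 0 c d z1 z2 t11 t12 t22 (dupMap (e, x)).2 =
    Complex.exp (Real.pi * Complex.I * (((e.1 : ℕ) : ℂ) * c + ((e.2 : ℕ) : ℂ) * d)) *
     (thetaTerm (e.1 : ℕ) (e.2 : ℕ) 0 0 z1 z2 (2*t11) (2*t12) (2*t22) x.1 *
      thetaTerm (e.1 : ℕ) (e.2 : ℕ) 0 0 z1 z2 (2*t11) (2*t12) (2*t22) x.2) := by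
  unfold thetaTerm dupMap
  rw [← Complex.exp_add, ← Complex.exp_add, ← Complex.exp_add, Complex.exp_eq_exp_iff_exists_int]
  refine ⟨x.1.1 * c + x.1.2 * d, ?_⟩
  push_cast
  ring

lemma dup_general (c d : ℤ) (z1 z2 : ℂ) {t11 t12 t22 : ℂ} (h : posDefIm t11 t12 t22) :
    theta2 0 0 c d 0 0 t11 t12 t22 * theta2 0 0 c d z1 z2 t11 t12 t22 =
    ∑ e : Fin 2 × Fin 2,
      Complex.exp (Real.pi * Complex.I * (((e.1 : ℕ) : ℂ) * c + ((e.2 : ℕ) : ℂ) * d)) *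
      theta2 (e.1 : ℕ) (e.2 : ℕ) 0 0 z1 z2 (2*t11) (2*t12) (2*t22) ^ 2 := by
  have s1 := summable_thetaTerm 0 0 c d 0 0 h
  have s2 := summable_thetaTerm 0 0 c d z1 z2 h
  have s12 := (summable_mul_of_summable_norm s1 s2)
  simp only [theta2_eq]
  rw [tsum_mul_tsum_of_summable_norm s1 s2]
  have hE := (Equiv.ofBijective dupMap dupMap_bijective).tsum_eq (fun x : (ℤ × ℤ) × (ℤ × ℤ) =>
    thetaTerm 0 0 c d 0 0 t11 t12 t22 x.1 * thetaTerm 0 0 c d z1 z2 t11 t12 t22 x.2)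
  rw [← hE]
  have hS := (Equiv.ofBijective dupMap dupMap_bijective).summable_iff.2 s12
  rw [Summable.tsum_prod (by exact hS), tsum_fintype]
  refine Finset.sum_congr rfl fun e _ => ?_
  simp only [Equiv.ofBijective_apply, dup_term]
  rw [tsum_mul_left, pow_two]
  have s3 := summable_thetaTerm (e.1 : ℕ) (e.2 : ℕ) 0 0 z1 z2 (posDefIm_two h)
  rw [tsum_mul_tsum_of_summable_norm s3 s3]


/-- **Duplication (addition) theorem for second-order theta functions, diagonal cases.**
With `θ̂[ε](z) = θ[ε](z|2τ)`, the four identities relating `θ[00;··](0|τ)·θ[00;··](z|τ)`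
to the squares `θ̂[00;00](z)², θ̂[11;00](z)², θ̂[10;00](z)², θ̂[01;00](z)²` hold. -/
theorem theta_duplication_diagonal (t11 t12 t22 : ℂ) (hτ : posDefIm t11 t12 t22)
    (z1 z2 : ℂ) :
    theta2 0 0 0 0 0 0 t11 t12 t22 * theta2 0 0 0 0 z1 z2 t11 t12 t22 =
        theta2 0 0 0 0 z1 z2 (2*t11) (2*t12) (2*t22) ^ 2
          + theta2 1 1 0 0 z1 z2 (2*t11) (2*t12) (2*t22) ^ 2
          + theta2 1 0 0 0 z1 z2 (2*t11) (2*t12) (2*t22) ^ 2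
          + theta2 0 1 0 0 z1 z2 (2*t11) (2*t12) (2*t22) ^ 2 ∧
      theta2 0 0 1 1 0 0 t11 t12 t22 * theta2 0 0 1 1 z1 z2 t11 t12 t22 =
        theta2 0 0 0 0 z1 z2 (2*t11) (2*t12) (2*t22) ^ 2
          + theta2 1 1 0 0 z1 z2 (2*t11) (2*t12) (2*t22) ^ 2
          - theta2 1 0 0 0 z1 z2 (2*t11) (2*t12) (2*t22) ^ 2
          - theta2 0 1 0 0 z1 z2 (2*t11) (2*t12) (2*t22) ^ 2 ∧
      theta2 0 0 1 0 0 0 t11 t12 t22 * theta2 0 0 1 0 z1 z2 t11 t12 t22 =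
        theta2 0 0 0 0 z1 z2 (2*t11) (2*t12) (2*t22) ^ 2
          - theta2 1 1 0 0 z1 z2 (2*t11) (2*t12) (2*t22) ^ 2
          - theta2 1 0 0 0 z1 z2 (2*t11) (2*t12) (2*t22) ^ 2
          + theta2 0 1 0 0 z1 z2 (2*t11) (2*t12) (2*t22) ^ 2 ∧
      theta2 0 0 0 1 0 0 t11 t12 t22 * theta2 0 0 0 1 z1 z2 t11 t12 t22 =
        theta2 0 0 0 0 z1 z2 (2*t11) (2*t12) (2*t22) ^ 2
          - theta2 1 1 0 0 z1 z2 (2*t11) (2*t12) (2*t22) ^ 2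
          + theta2 1 0 0 0 z1 z2 (2*t11) (2*t12) (2*t22) ^ 2
          - theta2 0 1 0 0 z1 z2 (2*t11) (2*t12) (2*t22) ^ 2 := by
  have e1 : Complex.exp (Real.pi * Complex.I) = -1 := Complex.exp_pi_mul_I
  have e2 : Complex.exp (Real.pi * Complex.I * (1 + 1)) = 1 := by
    rw [mul_add, Complex.exp_add, mul_one, e1]; norm_num
  have h00 := dup_general 0 0 z1 z2 hτ
  have h11 := dup_general 1 1 z1 z2 hτ
  have h10 := dup_general 1 0 z1 z2 hτ
  have h01 := dup_general 0 1 z1 z2 hτ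
  simp only [Fintype.sum_prod_type, Fin.sum_univ_two, Fin.val_zero, Fin.val_one, Nat.cast_zero,
    Nat.cast_one, Int.cast_zero, Int.cast_one, mul_zero, zero_mul, mul_one, add_zero, zero_add,
    Complex.exp_zero, one_mul, e1, e2] at h00 h11 h10 h01
  refine ⟨?_, ?_, ?_, ?_⟩
  · rw [h00]; ring
  · rw [h11]; ring
  · rw [h10]; ring
  · rw [h01]; ring
end

section
/- Let τ, τ̃ be complex numbers with Im τ > 0 and Im τ̃ > 0, let ε₁', ε₂', ε₁'', ε₂'' be integers, and let z ∈ ℂ². Then θ[ε₁' ε₂'; ε₁'' ε₂''](z | ((τ, 1), (1, τ̃))) = exp(−(1/2)πi·ε₁'ε₂') · θ[ε₁' ε₂'; ε₁''+ε₂', ε₂''+ε₁'](z | ((τ, 0), (0, τ̃))). -/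
/-- **Reduction of the off-diagonal period `τ₁₂ = 1` to a diagonal period matrix.**
For integer characteristics,
`θ[ε₁' ε₂'; ε₁'' ε₂''](z | ((τ,1),(1,τ̃))) = e^{−πi ε₁'ε₂'/2} ·
θ[ε₁' ε₂'; ε₁''+ε₂', ε₂''+ε₁'](z | ((τ,0),(0,τ̃)))`. -/
theorem theta_offdiagonal_one_reduction
    (τ τ' : ℂ) (hτ : 0 < τ.im) (hτ' : 0 < τ'.im)
    (e1 e2 f1 f2 : ℤ) (z1 z2 : ℂ) :
    theta2 (e1 : ℝ) (e2 : ℝ) (f1 : ℝ) (f2 : ℝ) z1 z2 τ 1 τ' =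
      Complex.exp (-(1/2) * (Real.pi : ℂ) * Complex.I * (e1 : ℂ) * (e2 : ℂ)) *
        theta2 (e1 : ℝ) (e2 : ℝ) ((f1 : ℝ) + (e2 : ℝ)) ((f2 : ℝ) + (e1 : ℝ))
          z1 z2 τ 0 τ' := by
  unfold theta2
  rw [← tsum_mul_left]
  refine tsum_congr fun m => ?_
  rw [← Complex.exp_add, Complex.exp_eq_exp_iff_exists_int]
  refine ⟨m.1 * m.2, ?_⟩
  push_cast
  ring
end

section
/- Let τ be a symmetric 2×2 complex matrix with positive definite imaginary part and write θ[ε] for the genus-2 theta constant θ[ε](0|τ). Then θ²[11;00]·θ²[00;11] = θ²[00;00]·θ²[11;11] + θ²[10;01]·θ²[01;10]. -/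
noncomputable def thTerm (a b c d : ℤ) (t11 t12 t22 : ℂ) (m : ℤ × ℤ) : ℂ :=
  Complex.exp ((Real.pi : ℂ) * Complex.I *
    (((m.1 : ℂ) + (a : ℂ) / 2) ^ 2 * t11
      + 2 * ((m.1 : ℂ) + (a : ℂ) / 2) * ((m.2 : ℂ) + (b : ℂ) / 2) * t12
      + ((m.2 : ℂ) + (b : ℂ) / 2) ^ 2 * t22
      + ((m.1 : ℂ) + (a : ℂ) / 2) * c + ((m.2 : ℂ) + (b : ℂ) / 2) * d))

lemma theta2_eq_thTerm (a b c d : ℤ) (t11 t12 t22 : ℂ) :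
    theta2 (a : ℝ) (b : ℝ) (c : ℝ) (d : ℝ) 0 0 t11 t12 t22
      = ∑' m, thTerm a b c d t11 t12 t22 m := by
  unfold theta2
  refine tsum_congr fun m => ?_
  unfold thTerm
  congr 1
  push_cast
  ring

lemma summable_gauss1 (C : ℝ) (hC : 0 < C) (a : ℤ) :
    Summable fun m : ℤ => Real.exp (-Real.pi * (C * ((m : ℝ) + a / 2) ^ 2)) := by
  have h := (summable_jacobiTheta₂_term_iff (C * a / 2 * Complex.I) (C * Complex.I)).2
    (by simpa using hC)
  have h2 := (h.norm).mul_right (Real.exp (-Real.pi * (C * (a / 2) ^ 2)))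
  refine h2.congr fun m => ?_
  rw [norm_jacobiTheta₂_term, ← Real.exp_add]
  congr 1
  have e1 : (C * a / 2 * Complex.I : ℂ).im = C * a / 2 := by
    have : (C * a / 2 * Complex.I : ℂ) = ((C * a / 2 : ℝ) : ℂ) * Complex.I := by push_cast; ring
    rw [this, Complex.im_ofReal_mul]; simp
  have e2 : (C * Complex.I : ℂ).im = C := by simp
  rw [e1, e2]
  ring

lemma thTerm_summable (a b c d : ℤ) (t11 t12 t22 : ℂ)
    (h1 : 0 < t11.im) (h2 : 0 < t22.im) (h3 : t12.im ^ 2 < t11.im * t22.im) :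
    Summable fun m => ‖thTerm a b c d t11 t12 t22 m‖ := by
  obtain ⟨C, hC, hCd⟩ : ∃ C : ℝ, 0 < C ∧
      C * (t11.im + t22.im) = t11.im * t22.im - t12.im ^ 2 :=
    ⟨(t11.im * t22.im - t12.im ^ 2) / (t11.im + t22.im), by
      apply div_pos <;> linarith, by field_simp⟩
  have hs := (summable_gauss1 C hC a).mul_of_nonneg (summable_gauss1 C hC b)
    (fun _ => (Real.exp_pos _).le) (fun _ => (Real.exp_pos _).le)
  refine Summable.of_nonneg_of_le (fun _ => norm_nonneg _) (fun m => ?_) hs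
  rw [← Real.exp_add, thTerm, Complex.norm_exp, Real.exp_le_exp]
  set x : ℝ := (m.1 : ℝ) + a / 2 with hx
  set y : ℝ := (m.2 : ℝ) + b / 2 with hy
  have ex : ((m.1 : ℂ) + (a : ℂ) / 2) = (x : ℂ) := by rw [hx]; push_cast; ring
  have ey : ((m.2 : ℂ) + (b : ℂ) / 2) = (y : ℂ) := by rw [hy]; push_cast; ring
  rw [ex, ey]
  have : ((Real.pi : ℂ) * Complex.I * ((x : ℂ) ^ 2 * t11 + 2 * x * y * t12 + (y : ℂ) ^ 2 * t22
      + x * c + y * d)).re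
      = -Real.pi * (x ^ 2 * t11.im + 2 * x * y * t12.im + y ^ 2 * t22.im) := by
    simp [Complex.mul_re, Complex.mul_im, pow_two]
  rw [this]
  have key : C * x ^ 2 + C * y ^ 2 ≤ x ^ 2 * t11.im + 2 * x * y * t12.im + y ^ 2 * t22.im := by
    have hA : 0 < t11.im - C := by
      by_contra hh
      nlinarith [sq_nonneg t12.im, mul_pos hC h2, mul_pos h1 h2, sq_nonneg t11.im, mul_pos h1 h1]
    have : 0 ≤ (t11.im - C) *
        (x ^ 2 * t11.im + 2 * x * y * t12.im + y ^ 2 * t22.im - (C * x ^ 2 + C * y ^ 2)) := by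
      have e : (t11.im - C) *
        (x ^ 2 * t11.im + 2 * x * y * t12.im + y ^ 2 * t22.im - (C * x ^ 2 + C * y ^ 2))
        = ((t11.im - C) * x + t12.im * y) ^ 2 + (C * y) ^ 2 := by
        linear_combination (-y ^ 2) * hCd
      rw [e]; positivity
    have := nonneg_of_mul_nonneg_right this hA
    linarith
  nlinarith [Real.pi_pos]

noncomputable def thEquiv :
    (Fin 2 × Fin 2) × ((ℤ × ℤ) × (ℤ × ℤ)) ≃ (ℤ × ℤ) × (ℤ × ℤ) :=
  Equiv.ofBijective
    (fun p => ((p.2.1.1 + p.2.2.1 + ((p.1.1 : ℕ) : ℤ), p.2.1.2 + p.2.2.2 + ((p.1.2 : ℕ) : ℤ)),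
      (p.2.1.1 - p.2.2.1, p.2.1.2 - p.2.2.2))) (by
    constructor
    · rintro ⟨⟨s, t⟩, ⟨j1, j2⟩, ⟨k1, k2⟩⟩ ⟨⟨s', t'⟩, ⟨j1', j2'⟩, ⟨k1', k2'⟩⟩ h
      simp only [Prod.mk.injEq] at h ⊢
      simp only [Fin.ext_iff]
      have := s.2; have := t.2; have := s'.2; have := t'.2
      omega
    · rintro ⟨⟨m1, m2⟩, ⟨n1, n2⟩⟩
      refine ⟨⟨⟨⟨((m1 - n1) % 2).toNat, by omega⟩, ⟨((m2 - n2) % 2).toNat, by omega⟩⟩,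
        ⟨n1 + (m1 - n1) / 2, n2 + (m2 - n2) / 2⟩, ⟨(m1 - n1) / 2, (m2 - n2) / 2⟩⟩, ?_⟩
      simp only [Prod.mk.injEq]
      omega)

lemma thEquiv_apply (s t : Fin 2) (j1 j2 k1 k2 : ℤ) :
    thEquiv ((s, t), ((j1, j2), (k1, k2)))
      = ((j1 + k1 + ((s : ℕ) : ℤ), j2 + k2 + ((t : ℕ) : ℤ)), (j1 - k1, j2 - k2)) := rfl

lemma exp_pi_int (n : ℤ) : Complex.exp ((Real.pi : ℂ) * Complex.I * n) = (-1) ^ n := by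
  rw [mul_comm, Complex.exp_int_mul, Complex.exp_pi_mul_I]

noncomputable def Th (a b : ℤ) (t11 t12 t22 : ℂ) : ℂ :=
  ∑' m, thTerm a b 0 0 (2 * t11) (2 * t12) (2 * t22) m

lemma Th_shift1 (a b : ℤ) (t11 t12 t22 : ℂ) : Th (a + 2) b t11 t12 t22 = Th a b t11 t12 t22 := by
  unfold Th
  rw [← (Equiv.addRight ((1, 0) : ℤ × ℤ)).tsum_eq
    (thTerm a b 0 0 (2 * t11) (2 * t12) (2 * t22))]
  refine tsum_congr fun m => ?_
  simp only [thTerm, Equiv.coe_addRight, Prod.fst_add, Prod.snd_add]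
  congr 1
  push_cast
  ring

lemma Th_shift2 (a b : ℤ) (t11 t12 t22 : ℂ) : Th a (b + 2) t11 t12 t22 = Th a b t11 t12 t22 := by
  unfold Th
  rw [← (Equiv.addRight ((0, 1) : ℤ × ℤ)).tsum_eq
    (thTerm a b 0 0 (2 * t11) (2 * t12) (2 * t22))]
  refine tsum_congr fun m => ?_
  simp only [thTerm, Equiv.coe_addRight, Prod.fst_add, Prod.snd_add]
  congr 1
  push_cast
  ring

lemma theta_sq (a b c d : ℤ) (t11 t12 t22 : ℂ)
    (h1 : 0 < t11.im) (h2 : 0 < t22.im) (h3 : t12.im ^ 2 < t11.im * t22.im) :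
    theta2 (a : ℝ) (b : ℝ) (c : ℝ) (d : ℝ) 0 0 t11 t12 t22 ^ 2
      = ∑ s : Fin 2 × Fin 2, (-1 : ℂ) ^ ((((s.1 : ℕ) : ℤ) + a) * c + (((s.2 : ℕ) : ℤ) + b) * d) *
        (Th (((s.1 : ℕ) : ℤ) + a) (((s.2 : ℕ) : ℤ) + b) t11 t12 t22 *
          Th ((s.1 : ℕ) : ℤ) ((s.2 : ℕ) : ℤ) t11 t12 t22) := by
  have hs := thTerm_summable a b c d t11 t12 t22 h1 h2 h3
  have hs2 : ∀ a b : ℤ, Summable fun m =>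
      ‖thTerm a b 0 0 (2 * t11) (2 * t12) (2 * t22) m‖ := fun a b => by
    apply thTerm_summable <;> simp <;> nlinarith
  have hprod := summable_mul_of_summable_norm hs hs
  rw [theta2_eq_thTerm, pow_two, tsum_mul_tsum_of_summable_norm hs hs, ← thEquiv.tsum_eq,
    Summable.tsum_prod (f := fun p => thTerm a b c d t11 t12 t22 (thEquiv p).1 *
      thTerm a b c d t11 t12 t22 (thEquiv p).2) ((thEquiv.summable_iff).2 hprod), tsum_fintype]
  refine Finset.sum_congr rfl fun s _ => ?_
  unfold Th
  rw [tsum_mul_tsum_of_summable_norm (hs2 _ _) (hs2 _ _), ← tsum_mul_left]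
  refine tsum_congr fun m => ?_
  obtain ⟨⟨j1, j2⟩, ⟨k1, k2⟩⟩ := m
  obtain ⟨s1, s2⟩ := s
  rw [← exp_pi_int]
  have hper : Complex.exp ((Real.pi : ℂ) * Complex.I * ((2 * (j1 * c + j2 * d) : ℤ) : ℂ)) = 1 := by
    rw [exp_pi_int, zpow_mul]; simp
  rw [← one_mul (Complex.exp _ * _), ← hper]
  simp only [thTerm, thEquiv_apply, ← Complex.exp_add]
  congr 1
  push_cast
  ring

/-- **A relation between squares of even genus-2 theta constants.**
`θ²[11;00]·θ²[00;11] = θ²[00;00]·θ²[11;11] + θ²[10;01]·θ²[01;10]`. -/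
theorem theta_constants_squares_rel' (t11 t12 t22 : ℂ) (hτ : posDefIm t11 t12 t22) :
    theta2 1 1 0 0 0 0 t11 t12 t22 ^ 2 * theta2 0 0 1 1 0 0 t11 t12 t22 ^ 2 =
      theta2 0 0 0 0 0 0 t11 t12 t22 ^ 2 * theta2 1 1 1 1 0 0 t11 t12 t22 ^ 2
        + theta2 1 0 0 1 0 0 t11 t12 t22 ^ 2 * theta2 0 1 1 0 0 0 t11 t12 t22 ^ 2 := by
  unfold posDefIm at hτ
  have h1 : 0 < t11.im := by simpa using hτ.diag_pos (i := 0)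
  have h2 : 0 < t22.im := by simpa using hτ.diag_pos (i := 1)
  have h3 : t12.im ^ 2 < t11.im * t22.im := by
    have := hτ.det_pos
    rw [Matrix.det_fin_two_of] at this
    nlinarith
  have key := fun a b c d => theta_sq a b c d t11 t12 t22 h1 h2 h3
  have s20 : ∀ b, Th 2 b t11 t12 t22 = Th 0 b t11 t12 t22 := fun b => Th_shift1 0 b _ _ _
  have s02 : ∀ a, Th a 2 t11 t12 t22 = Th a 0 t11 t12 t22 := fun b => Th_shift2 b 0 _ _ _
  have k1 := key 1 1 0 0
  have k2 := key 0 0 1 1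
  have k3 := key 0 0 0 0
  have k4 := key 1 1 1 1
  have k5 := key 1 0 0 1
  have k6 := key 0 1 1 0
  have z3 : (-1 : ℂ) ^ (3 : ℤ) = -1 := by norm_num
  have z4 : (-1 : ℂ) ^ (4 : ℤ) = 1 := by norm_num
  have z2 : (-1 : ℂ) ^ (2 : ℤ) = 1 := by norm_num
  simp [Fintype.sum_prod_type, Fin.sum_univ_two, one_add_one_eq_two, s20, s02] at k1 k2 k3 k4 k5 k6
  norm_num [s20, s02, z2, z3, z4] at k1 k2 k3 k4 k5 k6
  rw [k1, k2, k3, k4, k5, k6]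
  ring
end

section
/- Let τ be a symmetric 2×2 complex matrix with positive definite imaginary part. With θⱼ[ε] denoting the partial derivative ∂θ[ε](z|τ)/∂z_j at z = 0 and θ[ε] the theta constant θ[ε](0|τ), the following Rosenhain derivative formula holds: θ₁[01;01]·θ₂[11;01] − θ₂[01;01]·θ₁[11;01] = π²·θ[00;10]·θ[00;11]·θ[11;11]·θ[01;10]. -/
/-- Partial derivative of the genus-2 theta function in the first argument `z₁`,
evaluated at `z = 0`. -/
noncomputable def theta2d1 (a b c d : ℝ) (t11 t12 t22 : ℂ) : ℂ :=
  deriv (fun w : ℂ => theta2 a b c d w 0 t11 t12 t22) 0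

/-- Partial derivative of the genus-2 theta function in the second argument `z₂`,
evaluated at `z = 0`. -/
noncomputable def theta2d2 (a b c d : ℝ) (t11 t12 t22 : ℂ) : ℂ :=
  deriv (fun w : ℂ => theta2 a b c d 0 w t11 t12 t22) 0

open Complex Filter Topology

noncomputable def wt (k : Fin 3) (x y : ℂ) : ℂ := ![1, x, y] k

noncomputable def gs (t1 t2 t3 x y : ℂ) : ℂ :=
  Complex.exp ((Real.pi : ℂ) * I * (x * x * t1 + 2 * x * y * t2 + y * y * t3))

noncomputable def ph (c d : ℤ) (x y : ℂ) : ℂ :=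
  Complex.exp ((Real.pi : ℂ) * I * (x * c + y * d))

noncomputable def Xt (k : Fin 3) (a b c d : ℤ) (t1 t2 t3 : ℂ) (m : ℤ × ℤ) : ℂ :=
  wt k (m.1 + (a : ℂ) / 2) (m.2 + (b : ℂ) / 2) *
    (ph c d (m.1 + (a : ℂ) / 2) (m.2 + (b : ℂ) / 2) *
      gs t1 t2 t3 (m.1 + (a : ℂ) / 2) (m.2 + (b : ℂ) / 2))

noncomputable def X (k : Fin 3) (a b c d : ℤ) (t1 t2 t3 : ℂ) : ℂ :=
  ∑' m : ℤ × ℤ, Xt k a b c d t1 t2 t3 m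

def PDd (δ : ℝ) (t1 t2 t3 : ℂ) : Prop :=
  ∀ x y : ℝ, δ * (x * x + y * y) ≤ t1.im * x * x + 2 * t2.im * x * y + t3.im * y * y

def PD (t1 t2 t3 : ℂ) : Prop := ∃ δ : ℝ, 0 < δ ∧ PDd δ t1 t2 t3

lemma PD_of_posDefIm {t1 t2 t3 : ℂ} (h : posDefIm t1 t2 t3) : PD t1 t2 t3 := by
  have hd := h.det_pos
  have h11 := h.diag_pos (i := 0)
  have h22 := h.diag_pos (i := 1)
  simp [Matrix.det_fin_two] at hd h11 h22
  set p := t1.im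
  set q := t2.im
  set r := t3.im
  have hs : 0 < p + r := by linarith
  refine ⟨(p * r - q * q) / (p + r), by apply div_pos <;> linarith, ?_⟩
  intro x y
  change _ ≤ p * x * x + 2 * q * x * y + r * y * y
  obtain ⟨δ, hδ⟩ : ∃ δ, δ = (p * r - q * q) / (p + r) := ⟨_, rfl⟩
  rw [← hδ]
  have h1 : δ * (p + r) = p * r - q * q := by rw [hδ]; field_simp
  have h2 : 0 < p - δ := by
    have : 0 < (p - δ) * (p + r) := by nlinarith [sq_nonneg q, mul_pos h11 h11]
    exact (mul_pos_iff_of_pos_right hs).1 this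
  have h3 : 0 ≤ (p - δ) * (p * x * x + 2 * q * x * y + r * y * y - δ * (x * x + y * y)) := by
    have : (p - δ) * (p * x * x + 2 * q * x * y + r * y * y - δ * (x * x + y * y))
      = ((p - δ) * x + q * y) ^ 2 + δ ^ 2 * y ^ 2 := by
      linear_combination (- y ^ 2) * h1
    rw [this]; positivity
  have := nonneg_of_mul_nonneg_right h3 h2
  linarith

lemma summable_exp_abs : Summable (fun n : ℤ => Real.exp (-|(n : ℝ)|)) := by
  have h : Summable (fun n : ℕ => Real.exp (-(n : ℝ))) := by
    simpa using Real.summable_exp_neg_nat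
  apply Summable.of_nat_of_neg
  · simpa using h
  · simpa using h

lemma bnd1 (δ R : ℝ) (hδ : 0 < δ) (a : ℤ) (n : ℤ) :
    (R + 1) * |(n : ℝ) + (a : ℝ) / 2| - Real.pi * δ * (((n : ℝ) + (a : ℝ) / 2) * ((n : ℝ) + (a : ℝ) / 2))
      ≤ ((R + 2) ^ 2 / (4 * (Real.pi * δ)) + |(a : ℝ) / 2|) + -|(n : ℝ)| := by
  have hp : 0 < Real.pi * δ := by positivity
  set x := (n : ℝ) + (a : ℝ) / 2 with hx
  have h1 : |(n : ℝ)| ≤ |x| + |(a : ℝ) / 2| := by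
    have : (n : ℝ) = x - (a : ℝ) / 2 := by rw [hx]; ring
    rw [this]; exact abs_sub _ _
  have h2 : (R + 2) * |x| - Real.pi * δ * (x * x) ≤ (R + 2) ^ 2 / (4 * (Real.pi * δ)) := by
    rw [le_div_iff₀ (by positivity), ← abs_mul_abs_self x]
    nlinarith [sq_nonneg (2 * (Real.pi * δ) * |x| - (R + 2))]
  linarith

lemma bnd (δ R : ℝ) (hδ : 0 < δ) (a b : ℤ) : ∃ u : ℤ × ℤ → ℝ, Summable u ∧ ∀ m : ℤ × ℤ,
    (1 + |(m.1 : ℝ) + (a : ℝ) / 2| + |(m.2 : ℝ) + (b : ℝ) / 2|) *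
      Real.exp (- Real.pi * (δ * (((m.1 : ℝ) + (a : ℝ) / 2) * ((m.1 : ℝ) + (a : ℝ) / 2)
        + ((m.2 : ℝ) + (b : ℝ) / 2) * ((m.2 : ℝ) + (b : ℝ) / 2)))
        + R * (|(m.1 : ℝ) + (a : ℝ) / 2| + |(m.2 : ℝ) + (b : ℝ) / 2|)) ≤ u m := by
  set K := (R + 2) ^ 2 / (4 * (Real.pi * δ)) + |(a : ℝ) / 2|
  set L := (R + 2) ^ 2 / (4 * (Real.pi * δ)) + |(b : ℝ) / 2|
  refine ⟨fun m => Real.exp (K + L) * (Real.exp (-|(m.1 : ℝ)|) * Real.exp (-|(m.2 : ℝ)|)), ?_, ?_⟩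
  · apply Summable.mul_left
    exact summable_exp_abs.mul_of_nonneg summable_exp_abs (fun _ => (Real.exp_pos _).le)
      (fun _ => (Real.exp_pos _).le)
  · intro m
    have h1 := bnd1 δ R hδ a m.1
    have h2 := bnd1 δ R hδ b m.2
    set x := (m.1 : ℝ) + (a : ℝ) / 2
    set y := (m.2 : ℝ) + (b : ℝ) / 2
    have h3 : 1 + |x| + |y| ≤ Real.exp (|x| + |y|) := by
      have := Real.add_one_le_exp (|x| + |y|); linarith
    calc _ ≤ Real.exp (|x| + |y|) * _ := by gcongr
      _ ≤ _ := by
        simp only [← Real.exp_add]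
        apply Real.exp_le_exp.2
        change _ ≤ K + _ at h1
        change _ ≤ L + _ at h2
        nlinarith

lemma norm_ph (c d : ℤ) (x y : ℝ) : ‖ph c d x y‖ = 1 := by
  rw [ph, Complex.norm_exp]
  simp

lemma norm_gs (t1 t2 t3 : ℂ) (x y : ℝ) : ‖gs t1 t2 t3 x y‖ =
    Real.exp (-Real.pi * (t1.im * x * x + 2 * t2.im * x * y + t3.im * y * y)) := by
  rw [gs, Complex.norm_exp]
  congr 1
  simp
  ring

lemma norm_wt (k : Fin 3) (x y : ℝ) : ‖wt k x y‖ ≤ 1 + |x| + |y| := by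
  have := abs_nonneg x
  have := abs_nonneg y
  fin_cases k <;> simp [wt] <;> linarith

lemma gs_ne (t1 t2 t3 x y : ℂ) : gs t1 t2 t3 x y ≠ 0 := Complex.exp_ne_zero _

lemma norm_Xt (k : Fin 3) (a b c d : ℤ) (t1 t2 t3 : ℂ) (m : ℤ × ℤ) (δ : ℝ)
    (h : PDd δ t1 t2 t3) : ‖Xt k a b c d t1 t2 t3 m‖ ≤
    (1 + |(m.1 : ℝ) + (a : ℝ) / 2| + |(m.2 : ℝ) + (b : ℝ) / 2|) *
      Real.exp (- Real.pi * (δ * (((m.1 : ℝ) + (a : ℝ) / 2) * ((m.1 : ℝ) + (a : ℝ) / 2)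
        + ((m.2 : ℝ) + (b : ℝ) / 2) * ((m.2 : ℝ) + (b : ℝ) / 2)))
        + 0 * (|(m.1 : ℝ) + (a : ℝ) / 2| + |(m.2 : ℝ) + (b : ℝ) / 2|)) := by
  have h1 : ((m.1 : ℂ) + (a : ℂ) / 2) = (((m.1 : ℝ) + (a : ℝ) / 2 : ℝ) : ℂ) := by push_cast; rfl
  have h2 : ((m.2 : ℂ) + (b : ℂ) / 2) = (((m.2 : ℝ) + (b : ℝ) / 2 : ℝ) : ℂ) := by push_cast; rfl
  rw [Xt, h1, h2, norm_mul, norm_mul, norm_ph, norm_gs, one_mul]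
  set x := (m.1 : ℝ) + (a : ℝ) / 2
  set y := (m.2 : ℝ) + (b : ℝ) / 2
  gcongr
  · exact norm_wt k x y
  · have := h x y
    have hp := Real.pi_pos
    nlinarith

lemma summable_norm_Xt (k : Fin 3) (a b c d : ℤ) {t1 t2 t3 : ℂ} (h : PD t1 t2 t3) :
    Summable (fun m => ‖Xt k a b c d t1 t2 t3 m‖) := by
  obtain ⟨δ, hδ, h⟩ := h
  obtain ⟨u, hu, hb⟩ := bnd δ 0 hδ a b
  exact Summable.of_nonneg_of_le (fun _ => norm_nonneg _)
    (fun m => (norm_Xt k a b c d t1 t2 t3 m δ h).trans (hb m)) hu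

/-! resummation -/
def bz (e : Bool) : ℤ := if e then 1 else 0

def rsm : (Bool × Bool) × ((ℤ × ℤ) × (ℤ × ℤ)) → (ℤ × ℤ) × (ℤ × ℤ) := fun s =>
  ((s.2.1.1 + s.2.2.1 + bz s.1.1, s.2.1.2 + s.2.2.2 + bz s.1.2),
    (s.2.1.1 - s.2.2.1, s.2.1.2 - s.2.2.2))

lemma rsm_bij : Function.Bijective rsm := by
  constructor
  · rintro ⟨⟨e, f⟩, ⟨⟨p1, p2⟩, ⟨q1, q2⟩⟩⟩ ⟨⟨e', f'⟩, ⟨⟨p1', p2'⟩, ⟨q1', q2'⟩⟩⟩ h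
    simp only [rsm, Prod.mk.injEq] at h ⊢
    obtain ⟨⟨h1, h2⟩, h3, h4⟩ := h
    cases e <;> cases e' <;> cases f <;> cases f' <;> simp [bz] at h1 h2 ⊢ <;> omega
  · rintro ⟨⟨m1, m2⟩, ⟨n1, n2⟩⟩
    have key : ∀ m n : ℤ, ∃ (e : Bool) (p q : ℤ), p + q + bz e = m ∧ p - q = n := by
      intro m n
      rcases Int.even_or_odd' (m - n) with ⟨q, h | h⟩
      · exact ⟨false, n + q, q, by simp [bz]; omega, by omega⟩
      · exact ⟨true, n + q, q, by simp [bz]; omega, by omega⟩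
    obtain ⟨e, p, q, h1, h2⟩ := key m1 n1
    obtain ⟨f, p', q', h3, h4⟩ := key m2 n2
    exact ⟨((e, f), ((p, p'), (q, q'))), by simp [rsm, h1, h2, h3, h4]⟩

lemma resum (H : (ℤ × ℤ) × (ℤ × ℤ) → ℂ) (hH : Summable H) :
    ∑' s, H s = ∑ e : Bool × Bool, ∑' s, H (rsm (e, s)) := by
  rw [← (Equiv.ofBijective rsm rsm_bij).tsum_eq H]
  have hs : Summable (fun s => H (rsm s)) :=
    (Equiv.ofBijective rsm rsm_bij).summable_iff.2 hH
  change ∑' s, H (rsm s) = _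
  rw [hs.tsum_prod, tsum_fintype]

lemma core (a b c d c' d' : ℤ) (t1 t2 t3 : ℂ) (e f : Bool) (p q : ℤ × ℤ) :
    Xt 0 a b c d t1 t2 t3 (rsm ((e, f), (p, q))).1 * Xt 0 a b c' d' t1 t2 t3 (rsm ((e, f), (p, q))).2
    = Xt 0 (a + bz e) (b + bz f) (c + c') (d + d') (2 * t1) (2 * t2) (2 * t3) p *
      Xt 0 (bz e) (bz f) (c - c') (d - d') (2 * t1) (2 * t2) (2 * t3) q := by
  simp only [Xt, wt, ph, gs, rsm, Matrix.cons_val_zero, one_mul, ← Complex.exp_add]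
  congr 1
  push_cast
  ring

lemma Xt_wt (k : Fin 3) (a b c d : ℤ) (t1 t2 t3 : ℂ) (m : ℤ × ℤ) :
    Xt k a b c d t1 t2 t3 m = wt k (m.1 + (a : ℂ) / 2) (m.2 + (b : ℂ) / 2) * Xt 0 a b c d t1 t2 t3 m := by
  simp [Xt, wt]

lemma XX {k l : Fin 3} {a b c d a' b' c' d' : ℤ} {t1 t2 t3 : ℂ} (h : PD t1 t2 t3) :
    HasSum (fun s : (ℤ × ℤ) × (ℤ × ℤ) => Xt k a b c d t1 t2 t3 s.1 * Xt l a' b' c' d' t1 t2 t3 s.2)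
      (X k a b c d t1 t2 t3 * X l a' b' c' d' t1 t2 t3) := by
  have h1 := summable_norm_Xt k a b c d h
  have h2 := summable_norm_Xt l a' b' c' d' h
  have := summable_mul_of_summable_norm h1 h2
  rw [X, X, tsum_mul_tsum_of_summable_norm h1 h2]
  exact this.hasSum

lemma PD.two {t1 t2 t3 : ℂ} (h : PD t1 t2 t3) : PD (2 * t1) (2 * t2) (2 * t3) := by
  obtain ⟨δ, hδ, h⟩ := h
  refine ⟨δ, hδ, fun x y => ?_⟩
  have := h x y
  have : 0 ≤ δ * (x * x + y * y) := mul_nonneg hδ.le (add_nonneg (mul_self_nonneg x) (mul_self_nonneg y))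
  simp
  nlinarith

lemma F00 (a b c d c' d' : ℤ) {t1 t2 t3 : ℂ} (h : PD t1 t2 t3) :
    X 0 a b c d t1 t2 t3 * X 0 a b c' d' t1 t2 t3 = ∑ e : Bool × Bool,
      X 0 (a + bz e.1) (b + bz e.2) (c + c') (d + d') (2 * t1) (2 * t2) (2 * t3) *
      X 0 (bz e.1) (bz e.2) (c - c') (d - d') (2 * t1) (2 * t2) (2 * t3) := by
  have h0 := XX (k := 0) (l := 0) (a := a) (b := b) (a' := a) (b' := b) (c := c) (d := d) (c' := c') (d' := d') h
  rw [← h0.tsum_eq, resum _ h0.summable]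
  refine Finset.sum_congr rfl fun e _ => ?_
  rw [← (XX h.two).tsum_eq]
  exact tsum_congr fun s => core ..

lemma Fi0 (k : Fin 3) (hk : k ≠ 0) (a b c d c' d' : ℤ) {t1 t2 t3 : ℂ} (h : PD t1 t2 t3) :
    X k a b c d t1 t2 t3 * X 0 a b c' d' t1 t2 t3 = ∑ e : Bool × Bool,
      (X k (a + bz e.1) (b + bz e.2) (c + c') (d + d') (2 * t1) (2 * t2) (2 * t3) *
        X 0 (bz e.1) (bz e.2) (c - c') (d - d') (2 * t1) (2 * t2) (2 * t3) +
      X 0 (a + bz e.1) (b + bz e.2) (c + c') (d + d') (2 * t1) (2 * t2) (2 * t3) *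
        X k (bz e.1) (bz e.2) (c - c') (d - d') (2 * t1) (2 * t2) (2 * t3)) := by
  have h0 := XX (k := k) (l := 0) (a := a) (b := b) (a' := a) (b' := b) (c := c) (d := d) (c' := c') (d' := d') h
  rw [← h0.tsum_eq, resum _ h0.summable]
  refine Finset.sum_congr rfl fun e _ => ?_
  rw [← ((XX h.two).add (XX h.two)).tsum_eq]
  refine tsum_congr fun s => ?_
  rw [Xt_wt k, mul_assoc, core, Xt_wt k, Xt_wt k (bz e.1)]
  fin_cases k
  · exact absurd rfl hk
  · simp [wt, rsm]; ring
  · simp [wt, rsm]; ring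

lemma FJ (a b c d c' d' : ℤ) {t1 t2 t3 : ℂ} (h : PD t1 t2 t3) :
    X 1 a b c d t1 t2 t3 * X 2 a b c' d' t1 t2 t3 - X 2 a b c d t1 t2 t3 * X 1 a b c' d' t1 t2 t3
     = ∑ e : Bool × Bool, (-2) *
      (X 1 (a + bz e.1) (b + bz e.2) (c + c') (d + d') (2 * t1) (2 * t2) (2 * t3) *
        X 2 (bz e.1) (bz e.2) (c - c') (d - d') (2 * t1) (2 * t2) (2 * t3) -
      X 2 (a + bz e.1) (b + bz e.2) (c + c') (d + d') (2 * t1) (2 * t2) (2 * t3) *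
        X 1 (bz e.1) (bz e.2) (c - c') (d - d') (2 * t1) (2 * t2) (2 * t3)) := by
  have h0 := (XX (k := 1) (l := 2) (a := a) (b := b) (a' := a) (b' := b) (c := c) (d := d) (c' := c') (d' := d') h).sub (XX (k := 2) (l := 1) (a := a) (b := b) (a' := a) (b' := b) (c := c) (d := d) (c' := c') (d' := d') h)
  rw [← h0.tsum_eq, resum _ h0.summable]
  refine Finset.sum_congr rfl fun e _ => ?_
  rw [← (((XX h.two).sub (XX h.two)).mul_left (-2)).tsum_eq]
  refine tsum_congr fun s => ?_
  have hc := core a b c d c' d' t1 t2 t3 e.1 e.2 s.1 s.2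
  simp only [Xt_wt 1, Xt_wt 2]
  have : ∀ A B C D x y : ℂ, A * x * (B * y) - C * x * (D * y) = (A * B - C * D) * (x * y) := by
    intros; ring
  rw [this, this, hc]
  simp [wt, rsm]; ring

lemma top1 (k : Fin 3) (a b c d : ℤ) (t1 t2 t3 : ℂ) :
    X k (a + 2) b c d t1 t2 t3 = X k a b c d t1 t2 t3 := by
  rw [X, X, ← (Equiv.prodCongr (Equiv.addRight (1 : ℤ)) (Equiv.refl ℤ)).tsum_eq
    (Xt k a b c d t1 t2 t3)]
  refine tsum_congr fun m => ?_
  have : (m.1 : ℂ) + ((a + 2 : ℤ) : ℂ) / 2 = ((m.1 + 1 : ℤ) : ℂ) + (a : ℂ) / 2 := by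
    push_cast; ring
  simp only [Xt, this, Equiv.prodCongr_apply, Prod.map, Equiv.coe_addRight, Equiv.refl_apply]

lemma top2 (k : Fin 3) (a b c d : ℤ) (t1 t2 t3 : ℂ) :
    X k a (b + 2) c d t1 t2 t3 = X k a b c d t1 t2 t3 := by
  rw [X, X, ← (Equiv.prodCongr (Equiv.refl ℤ) (Equiv.addRight (1 : ℤ))).tsum_eq
    (Xt k a b c d t1 t2 t3)]
  refine tsum_congr fun m => ?_
  have : (m.2 : ℂ) + ((b + 2 : ℤ) : ℂ) / 2 = ((m.2 + 1 : ℤ) : ℂ) + (b : ℂ) / 2 := by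
    push_cast; ring
  simp only [Xt, this, Equiv.prodCongr_apply, Prod.map, Equiv.coe_addRight, Equiv.refl_apply]

lemma bot1 (k : Fin 3) (a b c d : ℤ) (t1 t2 t3 : ℂ) :
    X k a b (c + 2) d t1 t2 t3 = Complex.exp (Real.pi * I * a) * X k a b c d t1 t2 t3 := by
  rw [X, X, ← tsum_mul_left]
  refine tsum_congr fun m => ?_
  have : ph (c + 2) d (m.1 + (a : ℂ) / 2) (m.2 + (b : ℂ) / 2) =
      Complex.exp (Real.pi * I * a) * ph c d (m.1 + (a : ℂ) / 2) (m.2 + (b : ℂ) / 2) := by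
    rw [ph, ph, ← Complex.exp_add, Complex.exp_eq_exp_iff_exists_int]
    refine ⟨m.1, ?_⟩
    push_cast; ring
  rw [Xt, this, Xt]; ring

lemma bot2 (k : Fin 3) (a b c d : ℤ) (t1 t2 t3 : ℂ) :
    X k a b c (d + 2) t1 t2 t3 = Complex.exp (Real.pi * I * b) * X k a b c d t1 t2 t3 := by
  rw [X, X, ← tsum_mul_left]
  refine tsum_congr fun m => ?_
  have : ph c (d + 2) (m.1 + (a : ℂ) / 2) (m.2 + (b : ℂ) / 2) =
      Complex.exp (Real.pi * I * b) * ph c d (m.1 + (a : ℂ) / 2) (m.2 + (b : ℂ) / 2) := by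
    rw [ph, ph, ← Complex.exp_add, Complex.exp_eq_exp_iff_exists_int]
    refine ⟨m.2, ?_⟩
    push_cast; ring
  rw [Xt, this, Xt]; ring

lemma par (k : Fin 3) (a b c d : ℤ) (t1 t2 t3 : ℂ) :
    X k a b c d t1 t2 t3 = (if k = 0 then 1 else -1) * Complex.exp (Real.pi * I * (a * c + b * d)) *
      X k a b c d t1 t2 t3 := by
  conv_lhs => rw [X, ← (Equiv.prodCongr (Equiv.subLeft (-a)) (Equiv.subLeft (-b))).tsum_eq
    (Xt k a b c d t1 t2 t3)]
  rw [X, ← tsum_mul_left]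
  refine tsum_congr fun m => ?_
  have h1 : ((-a - m.1 : ℤ) : ℂ) + (a : ℂ) / 2 = - (m.1 + (a : ℂ) / 2) := by
    push_cast; ring
  have h2 : ((-b - m.2 : ℤ) : ℂ) + (b : ℂ) / 2 = - (m.2 + (b : ℂ) / 2) := by
    push_cast; ring
  simp only [Xt, h1, h2, Equiv.prodCongr_apply, Prod.map, Equiv.subLeft_apply]
  have h3 : ph c d (-(m.1 + (a : ℂ) / 2)) (-(m.2 + (b : ℂ) / 2)) =
    Complex.exp (Real.pi * I * (a * c + b * d)) * ph c d (m.1 + (a : ℂ) / 2) (m.2 + (b : ℂ) / 2) := by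
    rw [ph, ph, ← Complex.exp_add, Complex.exp_eq_exp_iff_exists_int]
    refine ⟨- m.1 * c - m.2 * d - a * c - b * d, ?_⟩
    push_cast; ring
  have h4 : ∀ x y : ℂ, gs t1 t2 t3 (-x) (-y) = gs t1 t2 t3 x y := by
    intro x y; simp [gs]
  have h5 : ∀ x y : ℂ, wt k (-x) (-y) = (if k = 0 then 1 else -1) * wt k x y := by
    intro x y; fin_cases k <;> simp [wt]
  rw [h3, h4, h5]; ring

lemma exp_odd {n : ℤ} (h : Odd n) : Complex.exp (Real.pi * I * n) = -1 := by
  obtain ⟨k, rfl⟩ := h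
  rw [← Complex.exp_pi_mul_I, Complex.exp_eq_exp_iff_exists_int]
  exact ⟨k, by push_cast; ring⟩

lemma exp_even {n : ℤ} (h : Even n) : Complex.exp (Real.pi * I * n) = 1 := by
  obtain ⟨k, rfl⟩ := h
  rw [← Complex.exp_zero, Complex.exp_eq_exp_iff_exists_int]
  exact ⟨k, by push_cast; ring⟩

lemma par0 (a b c d : ℤ) (t1 t2 t3 : ℂ) (h : Odd (a * c + b * d)) :
    X 0 a b c d t1 t2 t3 = 0 := by
  have h1 := par 0 a b c d t1 t2 t3
  have h2 := exp_odd h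
  push_cast at h2
  rw [h2] at h1
  simp at h1
  exact self_eq_neg.1 h1

lemma park (k : Fin 3) (hk : k ≠ 0) (a b c d : ℤ) (t1 t2 t3 : ℂ) (h : Even (a * c + b * d)) :
    X k a b c d t1 t2 t3 = 0 := by
  have h1 := par k a b c d t1 t2 t3
  have h2 := exp_even h
  push_cast at h2
  rw [h2] at h1
  simp [hk] at h1
  exact self_eq_neg.1 h1

section
variable (k : Fin 3) (a b c d : ℤ) (t1 t2 t3 : ℂ)
lemma rT1 : X k 2 b c d t1 t2 t3 = X k 0 b c d t1 t2 t3 := top1 k 0 b c d t1 t2 t3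
lemma rT2 : X k a 2 c d t1 t2 t3 = X k a 0 c d t1 t2 t3 := top2 k a 0 c d t1 t2 t3
lemma rB10 : X k 0 b 2 d t1 t2 t3 = X k 0 b 0 d t1 t2 t3 := by
  have := bot1 k 0 b 0 d t1 t2 t3; simpa using this
lemma rB11 : X k 1 b 2 d t1 t2 t3 = - X k 1 b 0 d t1 t2 t3 := by
  have := bot1 k 1 b 0 d t1 t2 t3; simpa using this
lemma rB20 : X k a 0 c 2 t1 t2 t3 = X k a 0 c 0 t1 t2 t3 := by
  have := bot2 k a 0 c 0 t1 t2 t3; simpa using this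
lemma rB21 : X k a 1 c 2 t1 t2 t3 = - X k a 1 c 0 t1 t2 t3 := by
  have := bot2 k a 1 c 0 t1 t2 t3; simpa using this
lemma rN10 : X k 0 b (-1) d t1 t2 t3 = X k 0 b 1 d t1 t2 t3 := by
  have := bot1 k 0 b (-1) d t1 t2 t3; norm_num at this; exact this.symm
lemma rN11 : X k 1 b (-1) d t1 t2 t3 = - X k 1 b 1 d t1 t2 t3 := by
  have := bot1 k 1 b (-1) d t1 t2 t3; norm_num at this; rw [this]; ring
lemma rN20 : X k a 0 c (-1) t1 t2 t3 = X k a 0 c 1 t1 t2 t3 := by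
  have := bot2 k a 0 c (-1) t1 t2 t3; norm_num at this; exact this.symm
lemma rN21 : X k a 1 c (-1) t1 t2 t3 = - X k a 1 c 1 t1 t2 t3 := by
  have := bot2 k a 1 c (-1) t1 t2 t3; norm_num at this; rw [this]; ring
end

noncomputable def JJ (t1 t2 t3 : ℂ) : ℂ :=
  X 1 0 1 0 1 t1 t2 t3 * X 2 1 1 0 1 t1 t2 t3 - X 2 0 1 0 1 t1 t2 t3 * X 1 1 1 0 1 t1 t2 t3

noncomputable def KK (t1 t2 t3 : ℂ) : ℂ :=
  X 1 1 0 1 0 t1 t2 t3 * X 2 1 0 1 1 t1 t2 t3 - X 2 1 0 1 0 t1 t2 t3 * X 1 1 0 1 1 t1 t2 t3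

noncomputable def PP (t1 t2 t3 : ℂ) : ℂ :=
  X 0 0 0 1 0 t1 t2 t3 * X 0 0 0 1 1 t1 t2 t3 * X 0 1 1 1 1 t1 t2 t3 * X 0 0 1 1 0 t1 t2 t3

lemma K_eq {t1 t2 t3 : ℂ} (h : PD t1 t2 t3) :
    KK t1 t2 t3 = 4 * JJ (2 * t1) (2 * t2) (2 * t3) := by
  have h1 := FJ 1 0 1 0 1 1 h
  rw [KK, h1]
  simp only [Fintype.sum_prod_type, Fintype.sum_bool, bz, if_true, if_false, Bool.false_eq_true]
  norm_num only [rT1, rT2, rB10, rB11, rB20, rB21, rN10, rN11, rN20, rN21]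
  have e1 := park 1 (by decide) 1 0 0 1 (2 * t1) (2 * t2) (2 * t3) (by decide)
  have e2 := park 2 (by decide) 1 0 0 1 (2 * t1) (2 * t2) (2 * t3) (by decide)
  rw [JJ, e1, e2]
  ring

lemma P_eq {t1 t2 t3 : ℂ} (h : PD t1 t2 t3) :
    X 0 1 1 0 0 t1 t2 t3 * X 0 1 1 1 1 t1 t2 t3 * (X 0 0 1 0 0 t1 t2 t3 * X 0 0 1 1 0 t1 t2 t3)
      = 4 * PP (2 * t1) (2 * t2) (2 * t3) := by
  have h1 := F00 1 1 0 0 1 1 h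
  have h2 := F00 0 1 0 0 1 0 h
  rw [h1, h2]
  simp only [Fintype.sum_prod_type, Fintype.sum_bool, bz, if_true, if_false, Bool.false_eq_true]
  norm_num only [rT1, rT2, rB10, rB11, rB20, rB21, rN10, rN11, rN20, rN21]
  have e1 := par0 0 1 1 1 (2 * t1) (2 * t2) (2 * t3) (by decide)
  have e2 := par0 1 0 1 1 (2 * t1) (2 * t2) (2 * t3) (by decide)
  have e3 := par0 1 0 1 0 (2 * t1) (2 * t2) (2 * t3) (by decide)
  have e4 := par0 1 1 1 0 (2 * t1) (2 * t2) (2 * t3) (by decide)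
  rw [PP, e1, e2, e3, e4]
  ring

lemma V_eq {t1 t2 t3 : ℂ} (h : PD t1 t2 t3) :
    X 0 1 0 0 0 t1 t2 t3 ^ 2 - X 0 1 0 0 1 t1 t2 t3 ^ 2
      = 4 * (X 0 1 1 0 0 (2 * t1) (2 * t2) (2 * t3) * X 0 0 1 0 0 (2 * t1) (2 * t2) (2 * t3)) := by
  have h1 := F00 1 0 0 0 0 0 h
  have h2 := F00 1 0 0 1 0 1 h
  rw [pow_two, pow_two, h1, h2]
  simp only [Fintype.sum_prod_type, Fintype.sum_bool, bz, if_true, if_false, Bool.false_eq_true]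
  norm_num only [rT1, rT2, rB10, rB11, rB20, rB21, rN10, rN11, rN20, rN21]
  ring

lemma X_eq (k : Fin 3) (hk : k ≠ 0) {t1 t2 t3 : ℂ} (h : PD t1 t2 t3) :
    X k 1 0 1 0 t1 t2 t3 * X 0 1 0 0 0 t1 t2 t3 + X k 1 0 1 1 t1 t2 t3 * X 0 1 0 0 1 t1 t2 t3
      = 4 * (X k 1 0 1 0 (2 * t1) (2 * t2) (2 * t3) * X 0 0 0 1 0 (2 * t1) (2 * t2) (2 * t3)) := by
  have h1 := Fi0 k hk 1 0 1 0 0 0 h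
  have h2 := Fi0 k hk 1 0 1 1 0 1 h
  rw [h1, h2]
  simp only [Fintype.sum_prod_type, Fintype.sum_bool, bz, if_true, if_false, Bool.false_eq_true]
  norm_num only [rT1, rT2, rB10, rB11, rB20, rB21, rN10, rN11, rN20, rN21]
  have e1 := park k hk 0 0 1 0 (2 * t1) (2 * t2) (2 * t3) (by decide)
  have e2 := park k hk 0 1 1 0 (2 * t1) (2 * t2) (2 * t3) (by decide)
  rw [e1, e2]
  ring

lemma X_eq' (k : Fin 3) (hk : k ≠ 0) {t1 t2 t3 : ℂ} (h : PD t1 t2 t3) :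
    X k 1 0 1 0 t1 t2 t3 * X 0 1 0 0 1 t1 t2 t3 + X k 1 0 1 1 t1 t2 t3 * X 0 1 0 0 0 t1 t2 t3
      = 4 * (X k 1 0 1 1 (2 * t1) (2 * t2) (2 * t3) * X 0 0 0 1 1 (2 * t1) (2 * t2) (2 * t3)) := by
  have h1 := Fi0 k hk 1 0 1 0 0 1 h
  have h2 := Fi0 k hk 1 0 1 1 0 0 h
  rw [h1, h2]
  simp only [Fintype.sum_prod_type, Fintype.sum_bool, bz, if_true, if_false, Bool.false_eq_true]
  norm_num only [rT1, rT2, rB10, rB11, rB20, rB21, rN10, rN11, rN20, rN21]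
  have e1 := park k hk 0 0 1 1 (2 * t1) (2 * t2) (2 * t3) (by decide)
  have e2 := par0 0 1 1 1 (2 * t1) (2 * t2) (2 * t3) (by decide)
  have e3 := park k hk 1 1 1 1 (2 * t1) (2 * t2) (2 * t3) (by decide)
  rw [e1, e2, e3]
  ring

lemma dup_aux {s1 s2 s3 t1 t2 t3 : ℂ} (h : PD s1 s2 s3)
    (e1 : t1 = 2 * s1) (e2 : t2 = 2 * s2) (e3 : t3 = 2 * s3) :
    JJ (2 * t1) (2 * t2) (2 * t3) * PP t1 t2 t3 = JJ t1 t2 t3 * PP (2 * t1) (2 * t2) (2 * t3) := by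
  have hT : PD t1 t2 t3 := by rw [e1, e2, e3]; exact h.two
  have a1 := K_eq hT
  have a2 := P_eq hT
  have a3 := V_eq h
  have b1 := X_eq 1 (by decide) h
  have b2 := X_eq 2 (by decide) h
  have c1 := X_eq' 1 (by decide) h
  have c2 := X_eq' 2 (by decide) h
  have a4 := K_eq h
  rw [← e1, ← e2, ← e3] at a3 b1 b2 c1 c2 a4
  have key : KK t1 t2 t3 * (X 0 0 0 1 0 t1 t2 t3 * X 0 0 0 1 1 t1 t2 t3) =
      JJ t1 t2 t3 * (X 0 1 1 0 0 t1 t2 t3 * X 0 0 1 0 0 t1 t2 t3) := by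
    have : 16 * (KK t1 t2 t3 * (X 0 0 0 1 0 t1 t2 t3 * X 0 0 0 1 1 t1 t2 t3)) =
       KK s1 s2 s3 * (X 0 1 0 0 0 s1 s2 s3 ^ 2 - X 0 1 0 0 1 s1 s2 s3 ^ 2) := by
      have : 16 * (KK t1 t2 t3 * (X 0 0 0 1 0 t1 t2 t3 * X 0 0 0 1 1 t1 t2 t3)) =
        (4 * (X 1 1 0 1 0 t1 t2 t3 * X 0 0 0 1 0 t1 t2 t3)) * (4 * (X 2 1 0 1 1 t1 t2 t3 * X 0 0 0 1 1 t1 t2 t3))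
        - (4 * (X 2 1 0 1 0 t1 t2 t3 * X 0 0 0 1 0 t1 t2 t3)) * (4 * (X 1 1 0 1 1 t1 t2 t3 * X 0 0 0 1 1 t1 t2 t3)) := by
        rw [KK]; ring
      rw [this, ← b1, ← b2, ← c1, ← c2, KK]; ring
    rw [a3, a4] at this
    linear_combination this / 16
  have d1 : 4 * (JJ (2 * t1) (2 * t2) (2 * t3) * PP t1 t2 t3) =
      KK t1 t2 t3 * (X 0 0 0 1 0 t1 t2 t3 * X 0 0 0 1 1 t1 t2 t3) *
        (X 0 1 1 1 1 t1 t2 t3 * X 0 0 1 1 0 t1 t2 t3) := by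
    rw [a1, PP]; ring
  rw [key] at d1
  linear_combination d1 / 4 + JJ t1 t2 t3 * a2 / 4

lemma dup {t1 t2 t3 : ℂ} (h : PD t1 t2 t3) :
    JJ (2 * t1) (2 * t2) (2 * t3) * PP t1 t2 t3 = JJ t1 t2 t3 * PP (2 * t1) (2 * t2) (2 * t3) := by
  refine dup_aux (s1 := t1 / 2) (s2 := t2 / 2) (s3 := t3 / 2) ?_ (by ring) (by ring) (by ring)
  obtain ⟨δ, hδ, h⟩ := h
  refine ⟨δ / 2, by positivity, fun x y => ?_⟩
  have := h x y
  simp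
  nlinarith

noncomputable def QQ (t1 t2 t3 x y : ℂ) : ℂ := x * x * t1 + 2 * x * y * t2 + y * y * t3

lemma QQ_im (t1 t2 t3 : ℂ) (x y : ℝ) :
    (QQ t1 t2 t3 x y).im = t1.im * x * x + 2 * t2.im * x * y + t3.im * y * y := by
  simp [QQ]; ring

lemma norm_exp_pi (s : ℝ) (z : ℂ) :
    ‖Complex.exp (Real.pi * I * (s * z))‖ = Real.exp (-(Real.pi * (s * z.im))) := by
  rw [Complex.norm_exp]
  congr 1
  simp

lemma lim_lemma (k : Fin 3) (a b c d : ℤ) {t1 t2 t3 : ℂ} (h : PD t1 t2 t3) (q0 : ℂ)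
    (S : Finset (ℤ × ℤ))
    (hS : ∀ m ∈ S, QQ t1 t2 t3 (m.1 + (a : ℂ) / 2) (m.2 + (b : ℂ) / 2) = q0)
    (hn : ∀ m ∉ S, q0.im < (QQ t1 t2 t3 (m.1 + (a : ℂ) / 2) (m.2 + (b : ℂ) / 2)).im) :
    Tendsto (fun s : ℝ => X k a b c d (s * t1) (s * t2) (s * t3) *
      Complex.exp (Real.pi * I * (s * (-q0)))) atTop
      (𝓝 (∑ m ∈ S, wt k (m.1 + (a : ℂ) / 2) (m.2 + (b : ℂ) / 2) *
        ph c d (m.1 + (a : ℂ) / 2) (m.2 + (b : ℂ) / 2))) := by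
  classical
  set g : ℤ × ℤ → ℂ := fun m => wt k (m.1 + (a : ℂ) / 2) (m.2 + (b : ℂ) / 2) *
        ph c d (m.1 + (a : ℂ) / 2) (m.2 + (b : ℂ) / 2) with hg
  set q : ℤ × ℤ → ℂ := fun m => QQ t1 t2 t3 (m.1 + (a : ℂ) / 2) (m.2 + (b : ℂ) / 2) - q0 with hq
  have hform : ∀ (s : ℝ) m, Xt k a b c d (s * t1) (s * t2) (s * t3) m *
      Complex.exp (Real.pi * I * (s * (-q0))) = g m * Complex.exp (Real.pi * I * (s * q m)) := by
    intro s m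
    simp only [Xt, gs, hg, hq, QQ, mul_assoc, ← Complex.exp_add]
    congr 4
    ring
  have h1 : ∀ s : ℝ, X k a b c d (s * t1) (s * t2) (s * t3) *
      Complex.exp (Real.pi * I * (s * (-q0))) = ∑' m, g m * Complex.exp (Real.pi * I * (s * q m)) := by
    intro s
    rw [X, ← tsum_mul_right]
    exact tsum_congr fun m => hform s m
  have h2 : ∑ m ∈ S, g m = ∑' m, (if m ∈ S then g m else 0) := by
    rw [tsum_eq_sum (s := S) (by intro m hm; simp [hm])]
    exact Finset.sum_congr rfl fun m hm => by simp [hm]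
  have hq0 : ∀ m, 0 ≤ (q m).im := by
    intro m
    by_cases hm : m ∈ S
    · simp [hq, hS m hm]
    · have := hn m hm
      simp only [hq, Complex.sub_im]; linarith
  simp only [h1]
  rw [h2]
  refine tendsto_tsum_of_dominated_convergence
    (bound := fun m => ‖g m * Complex.exp (Real.pi * I * (((1 : ℝ) : ℂ) * q m))‖) ?_ ?_ ?_
  · simp only [← hform]
    simp only [norm_mul _ (Complex.exp _)]
    apply Summable.mul_right
    simpa using summable_norm_Xt k a b c d h
  · intro m
    by_cases hm : m ∈ S
    · have : q m = 0 := by simp [hq, hS m hm]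
      simp [hm, this]
    · have hpos : 0 < (q m).im := by
        have := hn m hm
        simp only [hq, Complex.sub_im]; linarith
      simp only [hm, if_false]
      rw [tendsto_zero_iff_norm_tendsto_zero]
      simp only [norm_mul, norm_exp_pi]
      rw [← mul_zero ‖g m‖]
      apply Tendsto.const_mul
      apply Real.tendsto_exp_neg_atTop_nhds_zero.comp
      apply Tendsto.const_mul_atTop Real.pi_pos
      exact tendsto_id.atTop_mul_const hpos
  · filter_upwards [eventually_ge_atTop (1 : ℝ)] with s hs m
    simp only [norm_mul, norm_exp_pi]
    gcongr
    exact hq0 m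

def CC (t1 t2 t3 : ℂ) : Prop := 0 < t2.im ∧ t2.im < t1.im ∧ t2.im < t3.im

lemma CC.pd {t1 t2 t3 : ℂ} (h : CC t1 t2 t3) : PD t1 t2 t3 := by
  obtain ⟨h1, h2, h3⟩ := h
  refine ⟨min (t1.im - t2.im) (t3.im - t2.im), by simp [h2, h3], fun x y => ?_⟩
  have a1 := min_le_left (t1.im - t2.im) (t3.im - t2.im)
  have a2 := min_le_right (t1.im - t2.im) (t3.im - t2.im)
  nlinarith [mul_le_mul_of_nonneg_right a1 (mul_self_nonneg x),
    mul_le_mul_of_nonneg_right a2 (mul_self_nonneg y), mul_nonneg h1.le (mul_self_nonneg (x + y))]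

lemma int_aux (n : ℤ) : 0 ≤ n * n + n := by
  rcases le_or_gt 0 n with h | h <;> nlinarith

lemma int_aux2 (n : ℤ) (h : n * n + n = 0) : n = 0 ∨ n = -1 := by
  have : n * (n + 1) = 0 := by linarith
  rcases mul_eq_zero.1 this with h | h <;> omega

lemma pos_aux {α β γ : ℝ} (hα : 0 < α) (hβ : 0 < β) (hγ : 0 < γ) {A B C : ℤ}
    (hA : 0 ≤ A) (hB : 0 ≤ B) (hC : 0 ≤ C) (h : ¬ (A = 0 ∧ B = 0 ∧ C = 0)) :
    0 < α * A + β * B + γ * C := by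
  have hA' : (0 : ℝ) ≤ A := by exact_mod_cast hA
  have hB' : (0 : ℝ) ≤ B := by exact_mod_cast hB
  have hC' : (0 : ℝ) ≤ C := by exact_mod_cast hC
  rcases hA.lt_or_eq with h1 | h1
  · have : (0 : ℝ) < A := by exact_mod_cast h1
    positivity
  rcases hB.lt_or_eq with h2 | h2
  · have : (0 : ℝ) < B := by exact_mod_cast h2
    positivity
  rcases hC.lt_or_eq with h3 | h3
  · have : (0 : ℝ) < C := by exact_mod_cast h3
    positivity
  exact absurd ⟨h1.symm, h2.symm, h3.symm⟩ h

lemma lim00 (k : Fin 3) (c d : ℤ) {t1 t2 t3 : ℂ} (h : CC t1 t2 t3) :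
    Tendsto (fun s : ℝ => X k 0 0 c d (s * t1) (s * t2) (s * t3)) atTop (𝓝 (wt k 0 0)) := by
  have := lim_lemma k 0 0 c d h.pd 0 {(0, 0)} ?_ ?_
  · simpa [ph] using this
  · intro m hm
    simp at hm
    simp [hm, QQ]
  · rintro ⟨m, n⟩ hm
    simp only [Finset.mem_singleton, Prod.mk.injEq] at hm
    have e := QQ_im t1 t2 t3 m n
    simp only [Complex.ofReal_intCast] at e
    simp only [Int.cast_zero, zero_div, add_zero, e, Complex.zero_im]
    obtain ⟨h1, h2, h3⟩ := h
    have := pos_aux (sub_pos.2 h2) (sub_pos.2 h3) h1 (mul_self_nonneg m) (mul_self_nonneg n)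
      (mul_self_nonneg (m + n)) (fun H => hm ⟨mul_self_eq_zero.1 H.1, mul_self_eq_zero.1 H.2.1⟩)
    push_cast at this
    linarith

lemma lim01 (k : Fin 3) (c d : ℤ) {t1 t2 t3 : ℂ} (h : CC t1 t2 t3) :
    Tendsto (fun s : ℝ => X k 0 1 c d (s * t1) (s * t2) (s * t3) *
      Complex.exp (Real.pi * I * (s * (-(t3 / 4))))) atTop
      (𝓝 (wt k 0 (1 / 2) * ph c d 0 (1 / 2) + wt k 0 (-1 / 2) * ph c d 0 (-1 / 2))) := by
  have := lim_lemma k 0 1 c d h.pd (t3 / 4) {(0, 0), (0, -1)} ?_ ?_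
  · convert this using 2
    rw [Finset.sum_pair (by simp)]
    norm_num
  · intro m hm
    simp at hm
    rcases hm with rfl | rfl <;> simp [QQ] <;> ring
  · rintro ⟨m, n⟩ hm
    simp only [Finset.mem_insert, Finset.mem_singleton, Prod.mk.injEq] at hm
    have e := QQ_im t1 t2 t3 m (n + 1 / 2)
    push_cast at e
    push_cast
    simp only [zero_div, add_zero, e]
    obtain ⟨h1, h2, h3⟩ := h
    have := pos_aux (sub_pos.2 h2) (sub_pos.2 h3) h1 (mul_self_nonneg m) (int_aux n)
      (int_aux (m + n)) (fun H => by
        have := mul_self_eq_zero.1 H.1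
        have := int_aux2 n H.2.1
        omega)
    push_cast at this
    have e2 : (t3 / 4).im = t3.im / 4 := by simp
    rw [e2]
    linarith

lemma lim11 (k : Fin 3) (c d : ℤ) {t1 t2 t3 : ℂ} (h : CC t1 t2 t3) :
    Tendsto (fun s : ℝ => X k 1 1 c d (s * t1) (s * t2) (s * t3) *
      Complex.exp (Real.pi * I * (s * (-(t1 / 4 - t2 / 2 + t3 / 4))))) atTop
      (𝓝 (wt k (1 / 2) (-1 / 2) * ph c d (1 / 2) (-1 / 2)
        + wt k (-1 / 2) (1 / 2) * ph c d (-1 / 2) (1 / 2))) := by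
  have := lim_lemma k 1 1 c d h.pd (t1 / 4 - t2 / 2 + t3 / 4) {(0, -1), (-1, 0)} ?_ ?_
  · convert this using 2
    rw [Finset.sum_pair (by simp)]
    norm_num
  · intro m hm
    simp at hm
    rcases hm with rfl | rfl <;> simp [QQ] <;> ring
  · rintro ⟨m, n⟩ hm
    simp only [Finset.mem_insert, Finset.mem_singleton, Prod.mk.injEq] at hm
    have e := QQ_im t1 t2 t3 (m + 1 / 2) (n + 1 / 2)
    push_cast at e
    push_cast
    simp only [e]
    obtain ⟨h1, h2, h3⟩ := h
    have := pos_aux (sub_pos.2 h2) (sub_pos.2 h3) h1 (int_aux m) (int_aux n)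
      (mul_self_nonneg (m + n + 1)) (fun H => by
        have := mul_self_eq_zero.1 H.2.2
        have := int_aux2 n H.2.1
        have := int_aux2 m H.1
        omega)
    push_cast at this
    have e2 : (t1 / 4 - t2 / 2 + t3 / 4).im = t1.im / 4 - t2.im / 2 + t3.im / 4 := by simp
    rw [e2]
    linarith

lemma exp_half : Complex.exp (Real.pi * I * (1 / 2)) = I := by
  have h : (Real.pi : ℂ) * I * (1 / 2) = Real.pi / 2 * I := by ring
  rw [h, Complex.exp_pi_div_two_mul_I]

lemma exp_neg_half : Complex.exp (Real.pi * I * (-1 / 2)) = -I := by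
  rw [← Complex.exp_neg_pi_div_two_mul_I]; congr 1; ring

lemma near {t1 t2 t3 : ℂ} (h : CC t1 t2 t3) :
    ∃ N : ℝ → ℂ, Tendsto (fun s : ℝ => JJ (s * t1) (s * t2) (s * t3) * N s) atTop (𝓝 (-1)) ∧
      Tendsto (fun s : ℝ => PP (s * t1) (s * t2) (s * t3) * N s) atTop (𝓝 4) := by
  refine ⟨fun s => Complex.exp (Real.pi * I * (s * (-(t3 / 4)))) *
    Complex.exp (Real.pi * I * (s * (-(t1 / 4 - t2 / 2 + t3 / 4)))), ?_, ?_⟩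
  · have := ((lim01 1 0 1 h).mul (lim11 2 0 1 h)).sub ((lim01 2 0 1 h).mul (lim11 1 0 1 h))
    convert this using 2
    · simp only [JJ]; ring
    · simp only [wt, ph]
      simp only [Int.cast_zero, Int.cast_one, mul_zero, mul_one, zero_add, exp_half, exp_neg_half]
      simp
      ring_nf
      simp
  · have := ((lim00 0 1 0 h).mul (lim00 0 1 1 h)).mul ((lim11 0 1 1 h).mul (lim01 0 1 0 h))
    convert this using 2
    · simp only [PP]; ring
    · simp [wt, ph]
      norm_num

lemma eventually_id {t1 t2 t3 : ℂ} (h : CC t1 t2 t3) :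
    ∀ᶠ s : ℝ in atTop, 4 * JJ (s * t1) (s * t2) (s * t3) + PP (s * t1) (s * t2) (s * t3) = 0 := by
  obtain ⟨N, hJ, hP⟩ := near h
  have h0 : ∀ᶠ s : ℝ in atTop, PP (s * t1) (s * t2) (s * t3) * N s ≠ 0 :=
    hP.eventually_ne (by norm_num)
  have hR : Tendsto (fun s : ℝ => JJ (s * t1) (s * t2) (s * t3) / PP (s * t1) (s * t2) (s * t3))
      atTop (𝓝 (-1 / 4)) := by
    refine (hJ.div hP (by norm_num)).congr' ?_
    filter_upwards [h0] with s hs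
    exact mul_div_mul_right _ _ (right_ne_zero_of_mul hs)
  obtain ⟨S, hS⟩ := eventually_atTop.1 h0
  filter_upwards [eventually_ge_atTop (max S 1)] with s hs
  have hs1 : 1 ≤ s := (le_max_right _ _).trans hs
  have hsS : S ≤ s := (le_max_left _ _).trans hs
  have hge : ∀ n : ℕ, s ≤ 2 ^ n * s := fun n => by
    have : (1 : ℝ) ≤ 2 ^ n := one_le_pow₀ (by norm_num)
    nlinarith
  have hne : ∀ n : ℕ, PP (((2 ^ n * s : ℝ) : ℂ) * t1) (((2 ^ n * s : ℝ) : ℂ) * t2) (((2 ^ n * s : ℝ) : ℂ) * t3) ≠ 0 :=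
    fun n => left_ne_zero_of_mul (hS _ (hsS.trans (hge n)))
  have hpd : ∀ r : ℝ, 1 ≤ r → PD (r * t1) (r * t2) (r * t3) := by
    intro r hr
    apply CC.pd
    obtain ⟨h1, h2, h3⟩ := h
    refine ⟨?_, ?_, ?_⟩ <;> simp only [Complex.re_ofReal_mul, Complex.im_ofReal_mul]
    · positivity
    · gcongr
    · gcongr
  have hconst : ∀ n : ℕ, JJ (((2 ^ n * s : ℝ) : ℂ) * t1) (((2 ^ n * s : ℝ) : ℂ) * t2) (((2 ^ n * s : ℝ) : ℂ) * t3) /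
      PP (((2 ^ n * s : ℝ) : ℂ) * t1) (((2 ^ n * s : ℝ) : ℂ) * t2) (((2 ^ n * s : ℝ) : ℂ) * t3) =
      JJ (s * t1) (s * t2) (s * t3) / PP (s * t1) (s * t2) (s * t3) := by
    intro n
    induction n with
    | zero => simp
    | succ n ih =>
      rw [← ih, div_eq_div_iff (hne _) (hne _)]
      have hd := dup (hpd (2 ^ n * s) (hs1.trans (hge n)))
      have : (((2 ^ (n + 1) * s : ℝ)) : ℂ) = 2 * ((2 ^ n * s : ℝ) : ℂ) := by push_cast; ring
      simp only [this, mul_assoc] at hd ⊢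
      exact hd
  have hlim : Tendsto (fun n : ℕ => (2 : ℝ) ^ n * s) atTop atTop :=
    (tendsto_pow_atTop_atTop_of_one_lt (by norm_num)).atTop_mul_const (by linarith)
  have := hR.comp hlim
  have h2 := tendsto_nhds_unique (this.congr hconst) tendsto_const_nhds
  have hn0 := hne 0
  simp only [pow_zero, one_mul] at hn0
  rw [div_eq_div_iff (by norm_num) hn0] at h2
  linear_combination -h2

lemma PDd_near {a1 a2 a3 b1 b2 b3 w0 : ℂ} {δ : ℝ} (hδ : 0 < δ)
    (h : PDd δ (a1 + w0 * b1) (a2 + w0 * b2) (a3 + w0 * b3)) : ∃ r > 0, ∀ w ∈ Metric.ball w0 r,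
    PDd (δ / 2) (a1 + w * b1) (a2 + w * b2) (a3 + w * b3) := by
  set B := ‖b1‖ + ‖b2‖ + ‖b3‖ + 1 with hB
  have hB0 : 0 < B := by positivity
  refine ⟨δ / (4 * B), by positivity, fun w hw x y => ?_⟩
  have key : ∀ b : ℂ, ‖b‖ ≤ B → |((w - w0) * b).im| ≤ δ / 4 := by
    intro b hb
    refine (Complex.abs_im_le_norm _).trans ?_
    rw [norm_mul]
    rw [Metric.mem_ball, dist_eq_norm] at hw
    calc _ ≤ δ / (4 * B) * B := by gcongr
      _ = δ / 4 := by field_simp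
  have n1 := norm_nonneg b1
  have n2 := norm_nonneg b2
  have n3 := norm_nonneg b3
  have k1 := abs_le.1 (key b1 (by linarith))
  have k2 := abs_le.1 (key b2 (by linarith))
  have k3 := abs_le.1 (key b3 (by linarith))
  have e : ∀ a b : ℂ, (a + w * b).im = (a + w0 * b).im + ((w - w0) * b).im := by
    intro a b; rw [← Complex.add_im]; congr 1; ring
  rw [e, e, e]
  have h0 := h x y
  generalize ((w - w0) * b1).im = p at *
  generalize ((w - w0) * b2).im = q at *
  generalize ((w - w0) * b3).im = r at *
  nlinarith [mul_nonneg (by linarith : 0 ≤ p + δ / 4) (mul_self_nonneg x),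
    mul_nonneg (by linarith : 0 ≤ r + δ / 4) (mul_self_nonneg y),
    mul_nonneg (by linarith : 0 ≤ δ / 4 + q) (mul_self_nonneg (x + y)),
    mul_nonneg (by linarith : 0 ≤ δ / 4 - q) (mul_self_nonneg (x - y))]

lemma diffX (k : Fin 3) (a b c d : ℤ) {a1 a2 a3 b1 b2 b3 w0 : ℂ}
    (h : PD (a1 + w0 * b1) (a2 + w0 * b2) (a3 + w0 * b3)) :
    DifferentiableAt ℂ (fun w => X k a b c d (a1 + w * b1) (a2 + w * b2) (a3 + w * b3)) w0 := by
  obtain ⟨δ, hδ, h⟩ := h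
  obtain ⟨r, hr, h⟩ := PDd_near hδ h
  obtain ⟨u, hu, hb⟩ := bnd (δ / 2) 0 (by positivity) a b
  have := differentiableOn_tsum_of_summable_norm (U := Metric.ball w0 r)
    (F := fun m w => Xt k a b c d (a1 + w * b1) (a2 + w * b2) (a3 + w * b3) m) hu ?_
    Metric.isOpen_ball ?_
  · exact this.differentiableAt (Metric.ball_mem_nhds w0 hr)
  · intro m
    apply Differentiable.differentiableOn
    unfold Xt gs
    fun_prop
  · intro m w hw
    exact (norm_Xt k a b c d _ _ _ m _ (h w hw)).trans (hb m)

lemma ident {a1 a2 a3 b1 b2 b3 : ℂ} {w0 w1 : ℝ}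
    (h0 : PD (a1 + w0 * b1) (a2 + w0 * b2) (a3 + w0 * b3))
    (h1 : PD (a1 + w1 * b1) (a2 + w1 * b2) (a3 + w1 * b3))
    (he : ∀ᶠ w : ℝ in 𝓝 w0, 4 * JJ (a1 + w * b1) (a2 + w * b2) (a3 + w * b3)
      + PP (a1 + w * b1) (a2 + w * b2) (a3 + w * b3) = 0) :
    4 * JJ (a1 + w1 * b1) (a2 + w1 * b2) (a3 + w1 * b3)
      + PP (a1 + w1 * b1) (a2 + w1 * b2) (a3 + w1 * b3) = 0 := by
  set U : Set ℂ := {w | PD (a1 + w * b1) (a2 + w * b2) (a3 + w * b3)} with hU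
  have hopen : IsOpen U := by
    rw [Metric.isOpen_iff]
    rintro w ⟨δ, hδ, h⟩
    obtain ⟨r, hr, h⟩ := PDd_near hδ h
    exact ⟨r, hr, fun w hw => ⟨δ / 2, by positivity, h w hw⟩⟩
  have hconv : Convex ℝ U := by
    rintro w ⟨δ, hδ, h⟩ w' ⟨δ', hδ', h'⟩ p q hp hq hpq
    refine ⟨min δ δ', by simp [hδ, hδ'], fun x y => ?_⟩
    have e : ∀ a b : ℂ, (a + (p • w + q • w') * b).im = p * (a + w * b).im + q * (a + w' * b).im := by
      intro a b
      simp
      linear_combination (1 - p - q) * a.im - (1 - p - q) * a.im + (-a.im) * hpq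
    rw [e, e, e]
    have h := h x y
    have h' := h' x y
    have hxy : 0 ≤ x * x + y * y := add_nonneg (mul_self_nonneg x) (mul_self_nonneg y)
    have m1 : min δ δ' * (x * x + y * y) ≤ δ * (x * x + y * y) := by gcongr; exact min_le_left _ _
    have m2 : min δ δ' * (x * x + y * y) ≤ δ' * (x * x + y * y) := by gcongr; exact min_le_right _ _
    have A := mul_le_mul_of_nonneg_left (m1.trans h) hp
    have B := mul_le_mul_of_nonneg_left (m2.trans h') hq
    have C : min δ δ' * (x * x + y * y)
        = p * (min δ δ' * (x * x + y * y)) + q * (min δ δ' * (x * x + y * y)) := by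
      rw [← add_mul, hpq, one_mul]
    refine (C.le.trans (add_le_add A B)).trans (le_of_eq (by ring))
  have han : AnalyticOnNhd ℂ (fun w : ℂ => 4 * JJ (a1 + w * b1) (a2 + w * b2) (a3 + w * b3)
      + PP (a1 + w * b1) (a2 + w * b2) (a3 + w * b3)) U := by
    apply DifferentiableOn.analyticOnNhd _ hopen
    intro w hw
    apply DifferentiableAt.differentiableWithinAt
    have D := fun k a b c d => diffX k a b c d hw
    unfold JJ PP
    exact ((((D _ _ _ _ _).mul (D _ _ _ _ _)).sub ((D _ _ _ _ _).mul (D _ _ _ _ _))).const_mul 4).add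
      ((((D _ _ _ _ _).mul (D _ _ _ _ _)).mul (D _ _ _ _ _)).mul (D _ _ _ _ _))
  have hz := han.eqOn_zero_of_preconnected_of_frequently_eq_zero hconv.isPreconnected (z₀ := (w0 : ℂ)) h0 ?_
  · exact hz (show (w1 : ℂ) ∈ U from h1)
  · have hf : ∃ᶠ w : ℝ in 𝓝[≠] w0, 4 * JJ (a1 + w * b1) (a2 + w * b2) (a3 + w * b3)
      + PP (a1 + w * b1) (a2 + w * b2) (a3 + w * b3) = 0 :=
      (he.filter_mono nhdsWithin_le_nhds).frequently
    have ht : Tendsto (fun w : ℝ => (w : ℂ)) (𝓝[≠] w0) (𝓝[≠] (w0 : ℂ)) := by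
      apply Complex.continuous_ofReal.continuousAt.continuousWithinAt.tendsto_nhdsWithin
      intro w hw
      simpa using hw
    exact ht.frequently hf

lemma id_CC {t1 t2 t3 : ℂ} (h : CC t1 t2 t3) : 4 * JJ t1 t2 t3 + PP t1 t2 t3 = 0 := by
  obtain ⟨S, hS⟩ := eventually_atTop.1 (eventually_id h)
  have hw0 : 0 < max S 0 + 1 := by positivity
  have := ident (a1 := 0) (a2 := 0) (a3 := 0) (b1 := t1) (b2 := t2) (b3 := t3)
    (w0 := max S 0 + 1) (w1 := 1) ?_ ?_ ?_
  · simpa using this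
  · apply CC.pd
    obtain ⟨h1, h2, h3⟩ := h
    simp only [zero_add]
    refine ⟨?_, ?_, ?_⟩ <;> simp only [Complex.im_ofReal_mul]
    · positivity
    · gcongr
    · gcongr
  · simpa using h.pd
  · have : ∀ᶠ w : ℝ in 𝓝 (max S 0 + 1), S < w :=
      eventually_gt_nhds (lt_of_le_of_lt (le_max_left _ _) (lt_add_one _))
    filter_upwards [this] with w hw
    simpa using hS w hw.le

lemma id_PD {t1 t2 t3 : ℂ} (h : PD t1 t2 t3) : 4 * JJ t1 t2 t3 + PP t1 t2 t3 = 0 := by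
  have := ident (a1 := 2 * I) (a2 := I) (a3 := 2 * I) (b1 := t1 - 2 * I) (b2 := t2 - I) (b3 := t3 - 2 * I)
    (w0 := 0) (w1 := 1) ?_ ?_ ?_
  · simpa using this
  · apply CC.pd
    simp [CC]
  · simpa using h
  · have c1 : Continuous (fun w : ℝ => (2 * I + w * (t1 - 2 * I)).im) := by fun_prop
    have c2 : Continuous (fun w : ℝ => (I + w * (t2 - I)).im) := by fun_prop
    have c3 : Continuous (fun w : ℝ => (2 * I + w * (t3 - 2 * I)).im) := by fun_prop
    have e1 : ∀ᶠ w : ℝ in 𝓝 0, 0 < (I + w * (t2 - I)).im :=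
      continuousAt_const.eventually_lt c2.continuousAt (by simp)
    have e2 : ∀ᶠ w : ℝ in 𝓝 0, (I + w * (t2 - I)).im < (2 * I + w * (t1 - 2 * I)).im :=
      c2.continuousAt.eventually_lt c1.continuousAt (by simp)
    have e3 : ∀ᶠ w : ℝ in 𝓝 0, (I + w * (t2 - I)).im < (2 * I + w * (t3 - 2 * I)).im :=
      c2.continuousAt.eventually_lt c3.continuousAt (by simp)
    filter_upwards [e1, e2, e3] with w h1 h2 h3
    exact id_CC ⟨h1, h2, h3⟩

lemma theta_eq (a b c d : ℤ) (z1 z2 t1 t2 t3 : ℂ) :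
    theta2 a b c d z1 z2 t1 t2 t3 = ∑' m : ℤ × ℤ, Xt 0 a b c d t1 t2 t3 m *
      Complex.exp (2 * Real.pi * I * ((m.1 + (a : ℂ) / 2) * z1 + (m.2 + (b : ℂ) / 2) * z2)) := by
  rw [theta2]
  refine tsum_congr fun m => ?_
  simp only [Xt, wt, ph, gs, Matrix.cons_val_zero, one_mul, ← Complex.exp_add]
  congr 1
  push_cast
  ring

lemma theta_X (a b c d : ℤ) (t1 t2 t3 : ℂ) :
    theta2 a b c d 0 0 t1 t2 t3 = X 0 a b c d t1 t2 t3 := by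
  rw [theta_eq, X]
  simp

lemma deriv_gen (k : Fin 3) (hk : k ≠ 0) (a b c d : ℤ) {t1 t2 t3 : ℂ} (h : PD t1 t2 t3) :
    deriv (fun w : ℂ => ∑' m : ℤ × ℤ, Xt 0 a b c d t1 t2 t3 m *
      Complex.exp (2 * Real.pi * I * (wt k (m.1 + (a : ℂ) / 2) (m.2 + (b : ℂ) / 2) * w))) 0
      = 2 * Real.pi * I * X k a b c d t1 t2 t3 := by
  obtain ⟨δ, hδ, h⟩ := h
  obtain ⟨u, hu, hb⟩ := bnd δ (2 * Real.pi) hδ a b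
  have := hasSum_deriv_of_summable_norm (U := Metric.ball (0 : ℂ) 1) (z := 0)
    (F := fun m w => Xt 0 a b c d t1 t2 t3 m *
      Complex.exp (2 * Real.pi * I * (wt k (m.1 + (a : ℂ) / 2) (m.2 + (b : ℂ) / 2) * w))) hu ?_
    Metric.isOpen_ball ?_ (by simp)
  · rw [← this.tsum_eq, X, ← tsum_mul_left]
    refine tsum_congr fun m => ?_
    rw [Xt_wt k]
    generalize wt k (m.1 + (a : ℂ) / 2) (m.2 + (b : ℂ) / 2) = v
    have hd : HasDerivAt (fun w : ℂ => Xt 0 a b c d t1 t2 t3 m * Complex.exp (2 * Real.pi * I * (v * w)))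
      (Xt 0 a b c d t1 t2 t3 m * (Complex.exp (2 * Real.pi * I * (v * 0)) * (2 * Real.pi * I * (v * 1)))) 0 :=
      ((((hasDerivAt_id (0 : ℂ)).const_mul v).const_mul (2 * Real.pi * I)).cexp).const_mul _
    rw [hd.deriv]
    simp
    ring
  · intro m
    apply Differentiable.differentiableOn
    fun_prop
  · intro m w hw
    refine le_trans ?_ (hb m)
    have hX := norm_Xt 0 a b c d t1 t2 t3 m δ h
    rw [norm_mul]
    refine (mul_le_mul_of_nonneg_right hX (norm_nonneg _)).trans ?_
    rw [mul_assoc]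
    gcongr ?_ * ?_
    rw [Complex.norm_exp, ← Real.exp_add]
    apply Real.exp_le_exp.2
    have hn : ‖wt k (m.1 + (a : ℂ) / 2) (m.2 + (b : ℂ) / 2)‖ ≤
        |(m.1 : ℝ) + (a : ℝ) / 2| + |(m.2 : ℝ) + (b : ℝ) / 2| := by
      have g1 : ‖(m.1 : ℂ) + (a : ℂ) / 2‖ = |(m.1 : ℝ) + (a : ℝ) / 2| := by
        rw [← Real.norm_eq_abs, ← Complex.norm_real]; push_cast; rfl
      have g2 : ‖(m.2 : ℂ) + (b : ℂ) / 2‖ = |(m.2 : ℝ) + (b : ℝ) / 2| := by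
        rw [← Real.norm_eq_abs, ← Complex.norm_real]; push_cast; rfl
      fin_cases k
      · exact absurd rfl hk
      · simp [wt, g1]
      · simp [wt, g2]
    have hre : (2 * Real.pi * I * (wt k (m.1 + (a : ℂ) / 2) (m.2 + (b : ℂ) / 2) * w)).re ≤
        2 * Real.pi * (|(m.1 : ℝ) + (a : ℝ) / 2| + |(m.2 : ℝ) + (b : ℝ) / 2|) := by
      refine (Complex.re_le_norm _).trans ?_
      have hw1 : ‖w‖ ≤ 1 := by
        have := Metric.mem_ball.1 hw
        rw [dist_zero_right] at this
        exact this.le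
      simp only [norm_mul, Complex.norm_I, mul_one, Complex.norm_real, Complex.norm_two,
        Real.norm_eq_abs, abs_of_pos Real.pi_pos]
      gcongr
      calc _ ≤ ‖wt k (m.1 + (a : ℂ) / 2) (m.2 + (b : ℂ) / 2)‖ * 1 := by gcongr
        _ ≤ _ := by rw [mul_one]; exact hn
    linarith

lemma d1_eq (a b c d : ℤ) {t1 t2 t3 : ℂ} (h : PD t1 t2 t3) :
    theta2d1 a b c d t1 t2 t3 = 2 * Real.pi * I * X 1 a b c d t1 t2 t3 := by
  rw [← deriv_gen 1 (by decide) a b c d h, theta2d1]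
  simp only [theta_eq, mul_zero, add_zero]
  rfl

lemma d2_eq (a b c d : ℤ) {t1 t2 t3 : ℂ} (h : PD t1 t2 t3) :
    theta2d2 a b c d t1 t2 t3 = 2 * Real.pi * I * X 2 a b c d t1 t2 t3 := by
  rw [← deriv_gen 2 (by decide) a b c d h, theta2d2]
  simp only [theta_eq, mul_zero, zero_add]
  rfl

/-- **A Rosenhain derivative formula.**
`θ₁[01;01]·θ₂[11;01] − θ₂[01;01]·θ₁[11;01] = π²·θ[00;10]·θ[00;11]·θ[11;11]·θ[01;10]`. -/
theorem rosenhain_derivative_formula (t11 t12 t22 : ℂ) (hτ : posDefIm t11 t12 t22) :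
    theta2d1 0 1 0 1 t11 t12 t22 * theta2d2 1 1 0 1 t11 t12 t22
        - theta2d2 0 1 0 1 t11 t12 t22 * theta2d1 1 1 0 1 t11 t12 t22 =
      (Real.pi : ℂ) ^ 2 * theta2 0 0 1 0 0 0 t11 t12 t22
        * theta2 0 0 1 1 0 0 t11 t12 t22 * theta2 1 1 1 1 0 0 t11 t12 t22
        * theta2 0 1 1 0 0 0 t11 t12 t22 := by
  have h := PD_of_posDefIm hτ
  have e1 := d1_eq 0 1 0 1 h
  have e2 := d2_eq 1 1 0 1 h
  have e3 := d2_eq 0 1 0 1 h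
  have e4 := d1_eq 1 1 0 1 h
  have f1 := theta_X 0 0 1 0 t11 t12 t22
  have f2 := theta_X 0 0 1 1 t11 t12 t22
  have f3 := theta_X 1 1 1 1 t11 t12 t22
  have f4 := theta_X 0 1 1 0 t11 t12 t22
  simp only [Int.cast_zero, Int.cast_one] at e1 e2 e3 e4 f1 f2 f3 f4
  rw [e1, e2, e3, e4, f1, f2, f3, f4]
  have key := id_PD h
  rw [JJ, PP] at key
  linear_combination (-(Real.pi : ℂ) ^ 2) * key + 4 * (Real.pi : ℂ) ^ 2 *
    (X 1 0 1 0 1 t11 t12 t22 * X 2 1 1 0 1 t11 t12 t22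
      - X 2 0 1 0 1 t11 t12 t22 * X 1 1 1 0 1 t11 t12 t22) * Complex.I_sq
end

section
/- Let τ₁₁, τ₂₂ be complex numbers with Im τ₁₁ > 0 and Im τ₂₂ > 0, let τ = ((τ₁₁, 1/4), (1/4, τ₂₂)), and set X = ϑ₃(0|4τ₁₁)·ϑ₃(0|4τ₂₂), Y = ϑ₂(0|4τ₁₁)·ϑ₄(0|4τ₂₂), Z = ϑ₄(0|4τ₁₁)·ϑ₂(0|4τ₂₂). Then the genus-2 theta constants θ[ε] = θ[ε](0|τ) satisfy θ[00;00] = X + Y + Z, θ[00;01] = X + Y − Z, θ[00;10] = X − Y + Z, and θ[00;11] = X − Y − Z. (These are the theta constants of the 4-sheeted covering over a torus, τ₁₂ = 1/4.) -/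
/-- Jacobi theta constant `ϑ₂(0|σ)`. -/
noncomputable def jtheta2 (σ : ℂ) : ℂ :=
  ∑' n : ℤ, Complex.exp ((Real.pi : ℂ) * Complex.I * ((n : ℂ) + 1 / 2) ^ 2 * σ)

/-- Jacobi theta constant `ϑ₃(0|σ)`. -/
noncomputable def jtheta3 (σ : ℂ) : ℂ :=
  ∑' n : ℤ, Complex.exp ((Real.pi : ℂ) * Complex.I * (n : ℂ) ^ 2 * σ)

/-- Jacobi theta constant `ϑ₄(0|σ)`. -/
noncomputable def jtheta4 (σ : ℂ) : ℂ :=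
  ∑' n : ℤ, (-1 : ℂ) ^ (n : ℤ) * Complex.exp ((Real.pi : ℂ) * Complex.I * (n : ℂ) ^ 2 * σ)

open Complex in
lemma aux_negOne_zpow (n : ℤ) : (-1 : ℂ) ^ n = exp ((Real.pi : ℂ) * I * n) := by
  rw [← Complex.exp_pi_mul_I, ← Complex.exp_int_mul]
  congr 1
  ring

lemma aux_split (f : ℤ → ℂ) (hf : Summable f) :
    ∑' n, f n = ∑' k : ℤ, f (2 * k) + ∑' k : ℤ, f (2 * k + 1) := by
  have he : Summable fun k : ℤ => f (2 * k) :=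
    hf.comp_injective (i := fun k : ℤ => 2 * k) (fun a b h => by simpa using h)
  have ho : Summable fun k : ℤ => f (2 * k + 1) :=
    hf.comp_injective (i := fun k : ℤ => 2 * k + 1) (fun a b h => by simpa using h)
  rw [← (Int.divModEquiv 2).symm.tsum_eq f, ← he.tsum_add ho]
  have hs : Summable fun x => f ((Int.divModEquiv 2).symm x) :=
    (Int.divModEquiv 2).symm.summable_iff.mpr hf
  rw [hs.tsum_prod]
  refine tsum_congr fun k => ?_
  rw [tsum_fintype, Fin.sum_univ_two]
  simp [Int.divModEquiv, mul_comm]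

lemma aux_sum3 {s : ℂ} (hs : 0 < s.im) :
    Summable fun n : ℤ => Complex.exp ((Real.pi : ℂ) * Complex.I * (n : ℂ) ^ 2 * s) := by
  have := (summable_jacobiTheta₂_term_iff 0 s).mpr hs
  refine this.congr fun n => ?_
  simp [jacobiTheta₂_term]

lemma aux_sum2 {s : ℂ} (hs : 0 < s.im) :
    Summable fun n : ℤ =>
      Complex.exp ((Real.pi : ℂ) * Complex.I * ((n : ℂ) + 1 / 2) ^ 2 * s) := by
  have := ((summable_jacobiTheta₂_term_iff (s / 2) s).mpr hs).mul_left
    (Complex.exp ((Real.pi : ℂ) * Complex.I * s / 4))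
  refine this.congr fun n => ?_
  rw [jacobiTheta₂_term, ← Complex.exp_add]
  congr 1
  ring

lemma aux_sign {f : ℤ → ℂ} (hf : Summable f) : Summable fun n : ℤ => (-1 : ℂ) ^ n * f n := by
  refine Summable.of_norm ?_
  refine hf.norm.congr fun n => ?_
  simp

lemma aux_zero (s : ℂ) :
    ∑' n : ℤ, (-1 : ℂ) ^ n *
      Complex.exp ((Real.pi : ℂ) * Complex.I * ((n : ℂ) + 1 / 2) ^ 2 * s) = 0 := by
  have h := (Equiv.subLeft (-1 : ℤ)).tsum_eq (fun n : ℤ => (-1 : ℂ) ^ n *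
      Complex.exp ((Real.pi : ℂ) * Complex.I * ((n : ℂ) + 1 / 2) ^ 2 * s))
  have h' : ∀ n : ℤ, (-1 : ℂ) ^ ((Equiv.subLeft (-1 : ℤ)) n) *
      Complex.exp ((Real.pi : ℂ) * Complex.I *
        ((((Equiv.subLeft (-1 : ℤ)) n : ℤ) : ℂ) + 1 / 2) ^ 2 * s) =
      -((-1 : ℂ) ^ n *
        Complex.exp ((Real.pi : ℂ) * Complex.I * ((n : ℂ) + 1 / 2) ^ 2 * s)) := by
    intro n
    have e1 : (-1 : ℂ) ^ (-1 - n) = -(-1 : ℂ) ^ n := by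
      rw [zpow_sub₀ (by norm_num)]
      rcases Int.even_or_odd n with hn | hn
      · simp [hn.neg_one_zpow]
      · simp [hn.neg_one_zpow]
    rw [Equiv.subLeft_apply, e1, neg_mul]
    congr 3
    push_cast
    ring
  rw [tsum_congr h', tsum_neg] at h
  exact self_eq_neg.mp h.symm

/-- general term -/
noncomputable def auxF (c d : ℤ) (t u : ℂ) (m n : ℤ) : ℂ :=
  Complex.exp ((Real.pi : ℂ) * Complex.I *
    ((m : ℂ) ^ 2 * t + m * n / 2 + (n : ℂ) ^ 2 * u + m * c + n * d))

lemma auxF_summable (c d : ℤ) {t u : ℂ} (ht : 0 < t.im) (hu : 0 < u.im) :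
    Summable fun x : ℤ × ℤ => auxF c d t u x.1 x.2 := by
  have h1 := ((summable_jacobiTheta₂_term_iff (c / 2) t).mpr ht).norm
  have h2 := ((summable_jacobiTheta₂_term_iff (d / 2) u).mpr hu).norm
  refine Summable.of_norm ((h1.mul_norm h2).congr fun x => ?_)
  have : auxF c d t u x.1 x.2 =
      Complex.exp (((Real.pi * (x.1 * x.2 / 2) : ℝ) : ℂ) * Complex.I) *
      (jacobiTheta₂_term x.1 (c / 2) t * jacobiTheta₂_term x.2 (d / 2) u) := by
    rw [jacobiTheta₂_term, jacobiTheta₂_term, ← Complex.exp_add, ← Complex.exp_add, auxF]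
    congr 1
    push_cast
    ring
  rw [this, norm_mul (Complex.exp _), Complex.norm_exp_ofReal_mul_I, one_mul, norm_mul]

lemma aux_ee (c d : ℤ) (t u : ℂ) (p q : ℤ) : auxF c d t u (2 * p) (2 * q) =
    Complex.exp ((Real.pi : ℂ) * Complex.I * (p : ℂ) ^ 2 * (4 * t)) *
    Complex.exp ((Real.pi : ℂ) * Complex.I * (q : ℂ) ^ 2 * (4 * u)) := by
  rw [auxF, ← Complex.exp_add, Complex.exp_eq_exp_iff_exists_int]
  refine ⟨p * q + p * c + q * d, ?_⟩
  push_cast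
  ring

lemma aux_eo (c d : ℤ) (t u : ℂ) (p q : ℤ) : auxF c d t u (2 * p) (2 * q + 1) =
    ((-1 : ℂ) ^ d * ((-1 : ℂ) ^ p *
      Complex.exp ((Real.pi : ℂ) * Complex.I * (p : ℂ) ^ 2 * (4 * t)))) *
    Complex.exp ((Real.pi : ℂ) * Complex.I * ((q : ℂ) + 1 / 2) ^ 2 * (4 * u)) := by
  rw [auxF, aux_negOne_zpow, aux_negOne_zpow, ← Complex.exp_add, ← Complex.exp_add,
    ← Complex.exp_add, Complex.exp_eq_exp_iff_exists_int]
  refine ⟨p * q + p * c + q * d, ?_⟩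
  push_cast
  ring

lemma aux_oe (c d : ℤ) (t u : ℂ) (p q : ℤ) : auxF c d t u (2 * p + 1) (2 * q) =
    ((-1 : ℂ) ^ c *
      Complex.exp ((Real.pi : ℂ) * Complex.I * ((p : ℂ) + 1 / 2) ^ 2 * (4 * t))) *
    ((-1 : ℂ) ^ q * Complex.exp ((Real.pi : ℂ) * Complex.I * (q : ℂ) ^ 2 * (4 * u))) := by
  rw [auxF, aux_negOne_zpow, aux_negOne_zpow, ← Complex.exp_add, ← Complex.exp_add,
    ← Complex.exp_add, Complex.exp_eq_exp_iff_exists_int]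
  refine ⟨p * q + p * c + q * d, ?_⟩
  push_cast
  ring

lemma aux_oo (c d : ℤ) (t u : ℂ) (p q : ℤ) : auxF c d t u (2 * p + 1) (2 * q + 1) =
    Complex.exp ((Real.pi : ℂ) * Complex.I *
      (((p : ℂ) + 1 / 2) ^ 2 * (4 * t) + 1 / 2 + p + c + d)) *
    ((-1 : ℂ) ^ q *
      Complex.exp ((Real.pi : ℂ) * Complex.I * ((q : ℂ) + 1 / 2) ^ 2 * (4 * u))) := by
  rw [auxF, aux_negOne_zpow, ← Complex.exp_add, ← Complex.exp_add,
    Complex.exp_eq_exp_iff_exists_int]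
  refine ⟨p * q + p * c + q * d, ?_⟩
  push_cast
  ring

lemma aux_main (c d : ℤ) {t u : ℂ} (ht : 0 < t.im) (hu : 0 < u.im) :
    theta2 0 0 c d 0 0 t (1 / 4) u =
      jtheta3 (4 * t) * jtheta3 (4 * u) + (-1 : ℂ) ^ c * (jtheta2 (4 * t) * jtheta4 (4 * u))
        + (-1 : ℂ) ^ d * (jtheta4 (4 * t) * jtheta2 (4 * u)) := by
  have hF := auxF_summable c d ht hu
  have ht4 : 0 < (4 * t).im := by simpa using ht
  have e0 : theta2 0 0 c d 0 0 t (1 / 4) u = ∑' x : ℤ × ℤ, auxF c d t u x.1 x.2 := by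
    rw [theta2]
    refine tsum_congr fun x => ?_
    rw [auxF]
    congr 1
    push_cast
    ring
  have hrow : ∀ m, Summable fun n => auxF c d t u m n := fun m => hF.prod_factor m
  have hg : Summable fun m => ∑' n, auxF c d t u m n := hF.prod
  have hE : ∀ p : ℤ, ∑' n, auxF c d t u (2 * p) n =
      Complex.exp ((Real.pi : ℂ) * Complex.I * (p : ℂ) ^ 2 * (4 * t)) * jtheta3 (4 * u) +
      ((-1 : ℂ) ^ d * ((-1 : ℂ) ^ p *
        Complex.exp ((Real.pi : ℂ) * Complex.I * (p : ℂ) ^ 2 * (4 * t)))) *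
        jtheta2 (4 * u) := by
    intro p
    rw [aux_split _ (hrow (2 * p)), tsum_congr (aux_ee c d t u p),
      tsum_congr (aux_eo c d t u p), tsum_mul_left, tsum_mul_left, jtheta3, jtheta2]
  have hO : ∀ p : ℤ, ∑' n, auxF c d t u (2 * p + 1) n =
      ((-1 : ℂ) ^ c *
        Complex.exp ((Real.pi : ℂ) * Complex.I * ((p : ℂ) + 1 / 2) ^ 2 * (4 * t))) *
        jtheta4 (4 * u) := by
    intro p
    rw [aux_split _ (hrow (2 * p + 1)), tsum_congr (aux_oe c d t u p),
      tsum_congr (aux_oo c d t u p), tsum_mul_left, tsum_mul_left, aux_zero, mul_zero,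
      add_zero, jtheta4]
  rw [e0, hF.tsum_prod, aux_split _ hg, tsum_congr hE, tsum_congr hO,
    Summable.tsum_add ((aux_sum3 ht4).mul_right _)
      (((aux_sign (aux_sum3 ht4)).mul_left _).mul_right _),
    tsum_mul_right, tsum_mul_right, tsum_mul_right, tsum_mul_left, tsum_mul_left]
  simp only [jtheta2, jtheta3, jtheta4]
  ring


/-- **Theta constants of the 4-sheeted covering over a torus (`τ₁₂ = 1/4`).**
With `X = ϑ₃(0|4τ₁₁)ϑ₃(0|4τ₂₂)`, `Y = ϑ₂(0|4τ₁₁)ϑ₄(0|4τ₂₂)`,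
`Z = ϑ₄(0|4τ₁₁)ϑ₂(0|4τ₂₂)`, and `θ[ε] = θ[ε](0|τ)` for
`τ = ((τ₁₁, 1/4), (1/4, τ₂₂))`:
`θ[00;00] = X+Y+Z`, `θ[00;01] = X+Y−Z`, `θ[00;10] = X−Y+Z`, `θ[00;11] = X−Y−Z`. -/
theorem theta_constants_four_sheeted (τ11 τ22 : ℂ) (h1 : 0 < τ11.im) (h2 : 0 < τ22.im) :
    theta2 0 0 0 0 0 0 τ11 (1/4) τ22 =
        jtheta3 (4*τ11) * jtheta3 (4*τ22) + jtheta2 (4*τ11) * jtheta4 (4*τ22)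
          + jtheta4 (4*τ11) * jtheta2 (4*τ22) ∧
      theta2 0 0 0 1 0 0 τ11 (1/4) τ22 =
        jtheta3 (4*τ11) * jtheta3 (4*τ22) + jtheta2 (4*τ11) * jtheta4 (4*τ22)
          - jtheta4 (4*τ11) * jtheta2 (4*τ22) ∧
      theta2 0 0 1 0 0 0 τ11 (1/4) τ22 =
        jtheta3 (4*τ11) * jtheta3 (4*τ22) - jtheta2 (4*τ11) * jtheta4 (4*τ22)
          + jtheta4 (4*τ11) * jtheta2 (4*τ22) ∧
      theta2 0 0 1 1 0 0 τ11 (1/4) τ22 =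
        jtheta3 (4*τ11) * jtheta3 (4*τ22) - jtheta2 (4*τ11) * jtheta4 (4*τ22)
          - jtheta4 (4*τ11) * jtheta2 (4*τ22) := by
  have h00 := aux_main 0 0 h1 h2
  have h01 := aux_main 0 1 h1 h2
  have h10 := aux_main 1 0 h1 h2
  have h11 := aux_main 1 1 h1 h2
  simp only [Int.cast_zero, Int.cast_one, zpow_zero, zpow_one] at h00 h01 h10 h11
  refine ⟨?_, ?_, ?_, ?_⟩
  · rw [h00]; ring
  · rw [h01]; ring
  · rw [h10]; ring
  · rw [h11]; ring
end

section
/- Let g₂, g₃, z, w be complex numbers with z² − 3g₂ ≠ 0 satisfying the genus-2 curve equation of the two-gap Lamé potential, w² = −(z² − 3g₂)·(z³ − (9/4)g₂z − (27/4)g₃). Set λ = 2w/(3(z² − 3g₂)), P = −(z³ − 27g₃)/(9(z² − 3g₂)) and P' = 2w(z³ − 9g₂z + 54g₃)/(27(z² − 3g₂)²). Then (i) λ³ − 3λP + P' = 0 (Hermite's cubic relation for the three-sheeted cover), and (ii) (P')² = 4P³ − g₂P − g₃ (so (P, P') lies on the elliptic curve with invariants g₂, g₃; this is the 3-sheeted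 cover π: C₂ → C₁ associated with the two-gap Lamé potential 6℘(x)). -/
/-- **The 3-sheeted cover `π : C₂ → C₁` for the two-gap Lamé potential `6℘(x)`.**
On the genus-2 curve `w² = −(z² − 3g₂)(z³ − (9/4)g₂z − (27/4)g₃)`, with
`λ = 2w/(3(z² − 3g₂))`, `P = −(z³ − 27g₃)/(9(z² − 3g₂))` and
`P' = 2w(z³ − 9g₂z + 54g₃)/(27(z² − 3g₂)²)`, one has Hermite's cubic relation
`λ³ − 3λP + P' = 0` and `(P')² = 4P³ − g₂P − g₃`. -/
theorem lame_three_sheeted_cover (g2 g3 z w : ℂ) (hz : z ^ 2 - 3 * g2 ≠ 0)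
    (hw : w ^ 2 = -(z ^ 2 - 3 * g2) * (z ^ 3 - (9/4) * g2 * z - (27/4) * g3)) :
    let lam : ℂ := 2 * w / (3 * (z ^ 2 - 3 * g2))
    let P : ℂ := -(z ^ 3 - 27 * g3) / (9 * (z ^ 2 - 3 * g2))
    let P' : ℂ := 2 * w * (z ^ 3 - 9 * g2 * z + 54 * g3) / (27 * (z ^ 2 - 3 * g2) ^ 2)
    lam ^ 3 - 3 * lam * P + P' = 0 ∧ P' ^ 2 = 4 * P ^ 3 - g2 * P - g3 := by
  intro lam P P'
  obtain ⟨D, hD⟩ : ∃ D, D = z ^ 2 - 3 * g2 := ⟨_, rfl⟩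
  have hlam : lam = 2 * w / (3 * D) := by rw [hD]
  have hP : P = -(z ^ 3 - 27 * g3) / (9 * D) := by rw [hD]
  have hP' : P' = 2 * w * (z ^ 3 - 9 * g2 * z + 54 * g3) / (27 * D ^ 2) := by rw [hD]
  clear_value lam P P'
  rw [← hD] at hz hw
  constructor
  · have h : lam ^ 3 - 3 * lam * P + P'
        = 2 * w * (4 * w ^ 2 + D * (3 * (z ^ 3 - 27 * g3)
          + (z ^ 3 - 9 * g2 * z + 54 * g3))) / (27 * D ^ 3) := by
      rw [hlam, hP, hP']; field_simp; ring
    rw [h, hw, div_eq_zero_iff]; left; ring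
  · have h : P' ^ 2 = 4 * w ^ 2 * (z ^ 3 - 9 * g2 * z + 54 * g3) ^ 2 / (729 * D ^ 4) := by
      rw [hP']; field_simp; ring
    have h2 : 4 * P ^ 3 - g2 * P - g3 = D * (-4 * (z ^ 3 - 27 * g3) ^ 3
        + 81 * g2 * (z ^ 3 - 27 * g3) * D ^ 2 - 729 * g3 * D ^ 3) / (729 * D ^ 4) := by
      rw [hP]; field_simp; ring
    rw [h, h2, hw]
    congr 1
    rw [hD]; ring
end

section
/- Let N ≥ 1 and let x₁, …, x_N : I → ℂ be differentiable functions on an open interval I ⊆ ℝ such that for all t ∈ I and all i ≠ j, x_i(t) − x_j(t) ∉ Λ, and such that the locus conditions Σ_{j≠i} ℘'(x_i(t) − x_j(t)) = 0 hold for each i and all t, and the particles evolve by the flow ẋ_i(t) = −12·Σ_{j≠i} ℘(x_i(t) − x_j(t)). Then the function u(x, t) = 2·Σ_{j=1}^N ℘(x − x_j(t)), defined for x ∉ {x_j(t)} + Λ, is a solution of the Korteweg–de Vries equation: ∂ₜu = 6u·∂ₓu − ∂ₓ³u. -/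
/-- The period lattice `Λ = 2ω₁ℤ + 2ω₂ℤ`. -/
def wlattice (ω1 ω2 : ℂ) : Set ℂ :=
  {w | ∃ m n : ℤ, w = 2 * ω1 * m + 2 * ω2 * n}

/-- The lattice point `2ω₁m + 2ω₂n` indexed by `p = (m, n) ∈ ℤ²`. -/
def wpt (ω1 ω2 : ℂ) (p : ℤ × ℤ) : ℂ := 2 * ω1 * (p.1 : ℂ) + 2 * ω2 * (p.2 : ℂ)

/-- The Weierstrass function `℘(z) = 1/z² + Σ_{ω∈Λ\{0}} (1/(z−ω)² − 1/ω²)` for the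
lattice `Λ = 2ω₁ℤ + 2ω₂ℤ`. -/
noncomputable def wp (ω1 ω2 z : ℂ) : ℂ :=
  1 / z ^ 2 + ∑' p : {q : ℤ × ℤ // q ≠ 0},
    (1 / (z - wpt ω1 ω2 p.1) ^ 2 - 1 / (wpt ω1 ω2 p.1) ^ 2)

/-- The invariant `g₂ = 60 Σ_{ω∈Λ\{0}} ω⁻⁴`. -/
noncomputable def wg2 (ω1 ω2 : ℂ) : ℂ :=
  60 * ∑' p : {q : ℤ × ℤ // q ≠ 0}, 1 / (wpt ω1 ω2 p.1) ^ 4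

/-- The invariant `g₃ = 140 Σ_{ω∈Λ\{0}} ω⁻⁶`. -/
noncomputable def wg3 (ω1 ω2 : ℂ) : ℂ :=
  140 * ∑' p : {q : ℤ × ℤ // q ≠ 0}, 1 / (wpt ω1 ω2 p.1) ^ 6

/-- The elliptic KdV solution `u(x, t) = 2 Σ_{j=1}^N ℘(x − x_j(t))`. -/
noncomputable def ellipticU (ω1 ω2 : ℂ) (N : ℕ) (x : Fin N → ℝ → ℂ) (y : ℂ) (t : ℝ) : ℂ :=
  2 * ∑ j : Fin N, wp ω1 ω2 (y - x j t)

open Filter Topology PeriodPair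

lemma kdv_liouville (L : PeriodPair) (F : ℂ → ℂ)
    (hper : ∀ z, ∀ l ∈ L.lattice, F (z + l) = F z)
    (hloc : ∀ v, ∃ g : ℂ → ℂ, AnalyticAt ℂ g v ∧ F =ᶠ[𝓝[≠] v] g)
    (y : ℂ) (hy : AnalyticAt ℂ F y) : deriv F y = 0 := by
  set G : ℂ → ℂ := fun v => limUnder (𝓝[≠] v) F with hG
  have key : ∀ v (g : ℂ → ℂ), AnalyticAt ℂ g v → F =ᶠ[𝓝[≠] v] g → G =ᶠ[𝓝 v] g := by
    intro v g hg hFg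
    have h0 : ∀ w, ContinuousAt g w → F =ᶠ[𝓝[≠] w] g → G w = g w := by
      intro w hw h
      apply Tendsto.limUnder_eq
      exact (hw.tendsto.mono_left nhdsWithin_le_nhds).congr' h.symm
    have h1 : ∀ᶠ w in 𝓝[≠] v, F =ᶠ[𝓝[≠] w] g := by
      have := eventually_eventually_nhdsWithin.mpr hFg
      filter_upwards [this, self_mem_nhdsWithin] with w hw hwv
      have h2 : 𝓝[{v}ᶜ] w = 𝓝 w := isOpen_compl_singleton.nhdsWithin_eq hwv
      rw [h2] at hw
      exact hw.filter_mono nhdsWithin_le_nhds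
    have h2 := eventually_nhdsWithin_iff.mp h1
    filter_upwards [h2, hg.eventually_analyticAt] with w hw hgw
    by_cases hwv : w = v
    · subst hwv
      exact h0 _ hgw.continuousAt hFg
    · exact h0 _ hgw.continuousAt (hw hwv)
  have hGd : Differentiable ℂ G := by
    intro v
    obtain ⟨g, hg, h⟩ := hloc v
    exact hg.differentiableAt.congr_of_eventuallyEq (key v g hg h)
  have hGper : ∀ z, ∀ l ∈ L.lattice, G (z + l) = G z := by
    intro z l hl
    obtain ⟨g, hg, h⟩ := hloc z
    have e1 : G z = g z := (key z g hg h).self_of_nhds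
    have ht : Tendsto (fun w => w - l) (𝓝[≠] (z + l)) (𝓝[≠] z) := by
      apply tendsto_nhdsWithin_of_tendsto_nhds_of_eventually_within
      · have : Tendsto (fun w : ℂ => w - l) (𝓝 (z + l)) (𝓝 (z + l - l)) :=
          (continuous_id.sub continuous_const).tendsto _
        rw [add_sub_cancel_right] at this
        exact this.mono_left nhdsWithin_le_nhds
      · filter_upwards [self_mem_nhdsWithin] with w hw h2
        apply hw
        simp only [Set.mem_singleton_iff] at h2 ⊢
        rw [← h2]; ring
    rw [e1]
    apply Tendsto.limUnder_eq
    have h3 : Tendsto F (𝓝[≠] z) (𝓝 (g z)) :=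
      (hg.continuousAt.tendsto.mono_left nhdsWithin_le_nhds).congr' h.symm
    refine (h3.comp ht).congr fun w => ?_
    have := hper (w - l) l hl
    simpa using this.symm
  have hconst := hGd.apply_eq_apply_of_bounded (IsZLattice.isCompact_range_of_periodic L.lattice _
    hGd.continuous fun z w hw ↦ hGper z w hw).isBounded
  have hFG : G =ᶠ[𝓝 y] F := key y F hy EventuallyEq.rfl
  rw [← hFG.deriv_eq]
  have : G = fun _ => G 0 := funext fun v => hconst v 0
  rw [this, deriv_const]

lemma kdv_double_zero (H : ℂ → ℂ) (v : ℂ) (hH : AnalyticAt ℂ H v) (h0 : H v = 0)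
    (h1 : deriv H v = 0) :
    ∃ h : ℂ → ℂ, AnalyticAt ℂ h v ∧ ∀ᶠ w in 𝓝 v, H w = (w - v) ^ 2 * h w := by
  have : ((2 : ℕ) : ℕ∞) ≤ analyticOrderAt H v := by
    rw [natCast_le_analyticOrderAt_iff_iteratedDeriv_eq_zero hH]
    intro i hi
    interval_cases i
    · simpa using h0
    · simpa using h1
  rw [natCast_le_analyticOrderAt hH] at this
  simpa using this

lemma kdv_P_analytic (L : PeriodPair) (a v : ℂ) (h : v - a ∉ L.lattice) :
    AnalyticAt ℂ (fun w => L.weierstrassP (w - a)) v := by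
  have h1 : AnalyticAt ℂ L.weierstrassP (v - a) := L.analyticOnNhd_weierstrassP _ h
  exact h1.fun_comp (f := fun w => w - a) (by fun_prop)

lemma kdv_P_hasDerivAt (L : PeriodPair) (z : ℂ) (h : z ∉ L.lattice) :
    HasDerivAt L.weierstrassP (L.derivWeierstrassP z) z := by
  rw [← L.deriv_weierstrassP]
  exact (L.analyticOnNhd_weierstrassP _ h).differentiableAt.hasDerivAt

lemma kdv_P_hasDerivAt' (L : PeriodPair) (a v : ℂ) (h : v - a ∉ L.lattice) :
    HasDerivAt (fun w => L.weierstrassP (w - a)) (L.derivWeierstrassP (v - a)) v :=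
  (kdv_P_hasDerivAt L _ h).comp_sub_const v a

lemma kdv_static (L : PeriodPair) (N : ℕ) (x : Fin N → ℂ)
    (hdist : ∀ i j, i ≠ j → x i - x j ∉ L.lattice)
    (hlocus : ∀ i, ∑ j ∈ Finset.univ.erase i, L.derivWeierstrassP (x i - x j) = 0)
    (y : ℂ) (hy : ∀ j, y - x j ∉ L.lattice) :
    (∑ j, L.weierstrassP (y - x j)) * (∑ j, L.derivWeierstrassP (y - x j))
      - ∑ j, L.weierstrassP (y - x j) * L.derivWeierstrassP (y - x j)
      - ∑ k, (∑ j ∈ Finset.univ.erase k, L.weierstrassP (x k - x j))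
          * L.derivWeierstrassP (y - x k) = 0 := by
  set C : Fin N → ℂ := fun k => ∑ j ∈ Finset.univ.erase k, L.weierstrassP (x k - x j) with hC
  set F : ℂ → ℂ := fun v => (∑ j, L.weierstrassP (v - x j)) ^ 2
    - ∑ j, L.weierstrassP (v - x j) ^ 2 - 2 * ∑ k, C k * L.weierstrassP (v - x k) with hF
  have hRA : ∀ (s : Finset (Fin N)) v, (∀ j ∈ s, v - x j ∉ L.lattice) →
      AnalyticAt ℂ (fun v => (∑ j ∈ s, L.weierstrassP (v - x j)) ^ 2
    - ∑ j ∈ s, L.weierstrassP (v - x j) ^ 2 - 2 * ∑ k ∈ s, C k * L.weierstrassP (v - x k)) v := by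
    intro s v hv
    refine AnalyticAt.fun_sub (AnalyticAt.fun_sub (AnalyticAt.fun_pow ?_ 2) ?_)
      (AnalyticAt.fun_mul analyticAt_const ?_)
    · exact Finset.analyticAt_fun_sum _ fun j hj => kdv_P_analytic L _ _ (hv j hj)
    · exact Finset.analyticAt_fun_sum _ fun j hj => (kdv_P_analytic L _ _ (hv j hj)).fun_pow 2
    · exact Finset.analyticAt_fun_sum _ fun j hj =>
        analyticAt_const.fun_mul (kdv_P_analytic L _ _ (hv j hj))
  have hFA : ∀ v, (∀ j, v - x j ∉ L.lattice) → AnalyticAt ℂ F v :=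
    fun v hv => hRA Finset.univ v fun j _ => hv j
  have hper : ∀ z, ∀ l ∈ L.lattice, F (z + l) = F z := by
    intro z l hl
    have : ∀ j, L.weierstrassP (z + l - x j) = L.weierstrassP (z - x j) := by
      intro j
      rw [show z + l - x j = z - x j + l by ring]
      exact L.weierstrassP_add_coe _ ⟨l, hl⟩
    simp only [hF, this]
  have hloc : ∀ v, ∃ g : ℂ → ℂ, AnalyticAt ℂ g v ∧ F =ᶠ[𝓝[≠] v] g := by
    intro v
    by_cases hv : ∀ j, v - x j ∉ L.lattice
    · exact ⟨F, hFA v hv, EventuallyEq.rfl⟩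
    push Not at hv
    obtain ⟨k, hk⟩ := hv
    have hv' : ∀ j ∈ Finset.univ.erase k, v - x j ∉ L.lattice := by
      intro j hj hmem
      apply hdist k j (Finset.ne_of_mem_erase hj).symm
      have := L.lattice.sub_mem hmem hk
      rwa [show v - x j - (v - x k) = x k - x j by ring] at this
    set H : ℂ → ℂ := fun w => ∑ j ∈ Finset.univ.erase k, L.weierstrassP (w - x j) - C k with hH
    have hHA : AnalyticAt ℂ H v := AnalyticAt.fun_sub
      (Finset.analyticAt_fun_sum _ fun j hj => kdv_P_analytic L _ _ (hv' j hj)) analyticAt_const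
    have hH0 : H v = 0 := by
      simp only [hH, hC]
      rw [sub_eq_zero]
      refine Finset.sum_congr rfl fun j _ => ?_
      rw [show v - x j = x k - x j + (v - x k) by ring]
      exact L.weierstrassP_add_coe _ ⟨_, hk⟩
    have hH1 : deriv H v = 0 := by
      have h1 : HasDerivAt H (∑ j ∈ Finset.univ.erase k, L.derivWeierstrassP (v - x j)) v :=
        (HasDerivAt.fun_sum fun j hj => kdv_P_hasDerivAt' L _ _ (hv' j hj)).sub_const _
      rw [h1.deriv, ← hlocus k]
      refine Finset.sum_congr rfl fun j _ => ?_
      rw [show v - x j = x k - x j + (v - x k) by ring]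
      exact L.derivWeierstrassP_add_coe _ ⟨_, hk⟩
    obtain ⟨h, hhA, hh⟩ := kdv_double_zero H v hHA hH0 hH1
    have hE : AnalyticAt ℂ (fun w => L.weierstrassPExcept 0 (w - v)) v := by
      have h1 : AnalyticAt ℂ (L.weierstrassPExcept 0) (v - v) := by
        rw [sub_self]; exact L.analyticAt_weierstrassPExcept 0
      exact h1.fun_comp (f := fun w => w - v) (by fun_prop)
    refine ⟨fun w => 2 * (L.weierstrassPExcept 0 (w - v) * H w + h w) +
      ((∑ j ∈ Finset.univ.erase k, L.weierstrassP (w - x j)) ^ 2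
    - ∑ j ∈ Finset.univ.erase k, L.weierstrassP (w - x j) ^ 2
    - 2 * ∑ i ∈ Finset.univ.erase k, C i * L.weierstrassP (w - x i)),
      (analyticAt_const.fun_mul ((hE.fun_mul hHA).fun_add hhA)).fun_add (hRA _ v hv'), ?_⟩
    filter_upwards [hh.filter_mono nhdsWithin_le_nhds, self_mem_nhdsWithin] with w hw hwv
    have hwv' : w - v ≠ 0 := sub_ne_zero.mpr hwv
    have e1 : L.weierstrassP (w - x k) = L.weierstrassPExcept 0 (w - v) + 1 / (w - v) ^ 2 := by
      rw [show w - x k = w - v + (v - x k) by ring]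
      have := L.weierstrassPExcept_add 0 (w - v)
      have h2 := L.weierstrassP_add_coe (w - v) ⟨_, hk⟩
      simp only at h2
      rw [h2, ← this]
      simp
    have e2 : h w = H w / (w - v) ^ 2 := by
      rw [hw]; field_simp
    have hk' : k ∈ (Finset.univ : Finset (Fin N)) := Finset.mem_univ k
    simp only [hF]
    rw [← Finset.add_sum_erase _ _ hk', ← Finset.add_sum_erase _ (fun j => _ ^ 2) hk',
      ← Finset.add_sum_erase _ (fun j => C j * _) hk', e2, hH, e1]
    ring
  have hD := kdv_liouville L F hper hloc y (hFA y hy)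
  have hD2 : HasDerivAt F (2 * (∑ j, L.weierstrassP (y - x j)) * (∑ j, L.derivWeierstrassP (y - x j))
      - ∑ j, 2 * L.weierstrassP (y - x j) * L.derivWeierstrassP (y - x j)
      - 2 * ∑ k, C k * L.derivWeierstrassP (y - x k)) y := by
    have hp := fun j => kdv_P_hasDerivAt' L _ _ (hy j)
    refine HasDerivAt.fun_sub (HasDerivAt.fun_sub ?_ ?_) (HasDerivAt.const_mul _ ?_)
    · simpa using (HasDerivAt.fun_sum (u := Finset.univ) fun j _ => hp j).fun_pow 2
    · refine HasDerivAt.fun_sum fun j _ => ?_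
      simpa using (hp j).fun_pow 2
    · exact HasDerivAt.fun_sum fun j _ => (hp j).const_mul _
  rw [hD2.deriv] at hD
  simp only [mul_assoc, ← Finset.mul_sum] at hD
  linear_combination hD / 2

lemma kdv_second (L : PeriodPair) (z : ℂ) (hz : z ∉ L.lattice) :
    deriv L.derivWeierstrassP z = 6 * L.weierstrassP z ^ 2 - L.g₂ / 2 := by
  have hopen : IsOpen ((L.lattice : Set ℂ)ᶜ) := L.isClosed_lattice.isOpen_compl
  have hconn : IsPreconnected ((L.lattice : Set ℂ)ᶜ) :=
    (Set.Countable.isConnected_compl_of_one_lt_rank (by simp)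
      (Set.countable_coe_iff.mp (inferInstanceAs (Countable L.lattice)))).2
  have hA := L.analyticOnNhd_derivWeierstrassP
  have hP := L.analyticOnNhd_weierstrassP
  have hB : AnalyticOnNhd ℂ (fun z => deriv L.derivWeierstrassP z
      - (6 * L.weierstrassP z ^ 2 - L.g₂ / 2)) (L.lattice : Set ℂ)ᶜ := fun w hw =>
    (hA w hw).deriv.fun_sub
      ((analyticAt_const.fun_mul ((hP w hw).fun_pow 2)).fun_sub analyticAt_const)
  rcases hA.eq_zero_or_eq_zero_of_mul_eq_zero hB (fun w hw => by
    have h1 := kdv_P_hasDerivAt L w hw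
    have h2 := (hA w hw).differentiableAt.hasDerivAt
    have h3 : HasDerivAt (fun w => L.derivWeierstrassP w ^ 2
        - (4 * L.weierstrassP w ^ 3 - L.g₂ * L.weierstrassP w - L.g₃)) _ w :=
      (h2.fun_pow 2).fun_sub ((((h1.fun_pow 3).const_mul 4).fun_sub (h1.const_mul L.g₂)).sub_const L.g₃)
    have h4 : (fun w => L.derivWeierstrassP w ^ 2
        - (4 * L.weierstrassP w ^ 3 - L.g₂ * L.weierstrassP w - L.g₃)) =ᶠ[𝓝 w] fun _ => 0 := by
      filter_upwards [hopen.mem_nhds hw] with v hv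
      rw [L.derivWeierstrassP_sq v hv, sub_self]
    have h5 := h3.deriv
    rw [h4.deriv_eq, deriv_const] at h5
    norm_num at h5
    linear_combination (-1 / 2) * h5) hconn with h | h
  · exfalso
    obtain ⟨c, hc⟩ := hopen.exists_is_const_of_deriv_eq_zero hconn
      L.differentiableOn_weierstrassP (fun w hw => by rw [L.deriv_weierstrassP]; exact h w hw)
    have h0 : (0 : ℂ) ∈ L.lattice := zero_mem _
    have hev : ∀ᶠ w in 𝓝[≠] (0 : ℂ), L.weierstrassP w = c := by
      have := L.compl_lattice_sdiff_singleton_mem_nhds 0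
      filter_upwards [mem_nhdsWithin_of_mem_nhds this, self_mem_nhdsWithin] with w hw hw0
      exact hc w fun hm => hw ⟨hm, hw0⟩
    have ho := L.order_weierstrassP 0 h0
    rw [meromorphicOrderAt_congr (f₂ := fun _ => c) hev] at ho
    have h1 : 0 ≤ meromorphicOrderAt (fun _ : ℂ => c) 0 :=
      (analyticAt_const (𝕜 := ℂ) (v := c) (x := (0 : ℂ))).meromorphicOrderAt_nonneg
    rw [ho] at h1
    exact absurd h1 (by decide)
  · have := h z hz
    exact sub_eq_zero.mp this

lemma kdv_third (L : PeriodPair) (z : ℂ) (hz : z ∉ L.lattice) :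
    HasDerivAt (deriv L.derivWeierstrassP) (12 * L.weierstrassP z * L.derivWeierstrassP z) z := by
  have hopen : IsOpen ((L.lattice : Set ℂ)ᶜ) := L.isClosed_lattice.isOpen_compl
  have h1 := ((((kdv_P_hasDerivAt L z hz).fun_pow 2).const_mul 6).sub_const (L.g₂ / 2))
  have h2 : deriv L.derivWeierstrassP =ᶠ[𝓝 z] fun w => 6 * L.weierstrassP w ^ 2 - L.g₂ / 2 := by
    filter_upwards [hopen.mem_nhds hz] with w hw using kdv_second L w hw
  refine (h1.congr_of_eventuallyEq h2).congr_deriv ?_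
  norm_num
  ring

lemma kdv_wp_eq (L : PeriodPair) (ω1 ω2 : ℂ) (h1 : L.ω₁ = 2 * ω1) (h2 : L.ω₂ = 2 * ω2) :
    wp ω1 ω2 = L.weierstrassP := by
  funext z
  have hs := L.hasSum_weierstrassP z
  have hp : ∀ p : ℤ × ℤ, ((L.latticeEquivProd.symm p : L.lattice) : ℂ) = wpt ω1 ω2 p := by
    intro p
    rw [L.latticeEquiv_symm_apply, h1, h2, wpt]; ring
  rw [← L.latticeEquivProd.symm.toEquiv.hasSum_iff] at hs
  have hs2 : HasSum (fun p : ℤ × ℤ => 1 / (z - wpt ω1 ω2 p) ^ 2 - 1 / (wpt ω1 ω2 p) ^ 2)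
      (L.weierstrassP z) := by
    convert hs using 2 with p
    simp [hp]
  have h3 := hs2.summable.sum_add_tsum_subtype_compl {(0 : ℤ × ℤ)}
  rw [hs2.tsum_eq] at h3
  rw [wp, ← h3]
  have h0 : wpt ω1 ω2 0 = 0 := by simp [wpt]
  rw [Finset.sum_singleton, h0]
  congr 1
  · simp
  · refine (Equiv.subtypeEquivRight (fun q => ?_)).tsum_eq
      (fun p : {q : ℤ × ℤ // q ∉ ({0} : Finset (ℤ × ℤ))} =>
      (1 / (z - wpt ω1 ω2 p.1) ^ 2 - 1 / (wpt ω1 ω2 p.1) ^ 2))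
    simp

/-- **Elliptic solutions of KdV from the Calogero–Moser flow on the locus.**
If the pairwise distinct (mod `Λ`) particles `x₁, …, x_N` satisfy the locus conditions
`Σ_{j≠i} ℘'(x_i − x_j) = 0` and the flow `ẋ_i = −12 Σ_{j≠i} ℘(x_i − x_j)`, then
`u(x, t) = 2 Σ_j ℘(x − x_j(t))` solves KdV: `∂ₜu = 6u·∂ₓu − ∂ₓ³u`. -/
theorem kdv_elliptic_solution (ω1 ω2 : ℂ)
    (hind : LinearIndependent ℝ ![2 * ω1, 2 * ω2])
    (N : ℕ) (hN : 1 ≤ N) (I : Set ℝ) (hI : IsOpen I) (x : Fin N → ℝ → ℂ)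
    (hdiff : ∀ i, DifferentiableOn ℝ (x i) I)
    (hdist : ∀ t ∈ I, ∀ i j, i ≠ j → x i t - x j t ∉ wlattice ω1 ω2)
    (hlocus : ∀ t ∈ I, ∀ i,
      ∑ j ∈ Finset.univ.erase i, deriv (wp ω1 ω2) (x i t - x j t) = 0)
    (hflow : ∀ t ∈ I, ∀ i,
      deriv (x i) t = -12 * ∑ j ∈ Finset.univ.erase i, wp ω1 ω2 (x i t - x j t)) :
    ∀ t ∈ I, ∀ y : ℂ, (∀ j, y - x j t ∉ wlattice ω1 ω2) →
      deriv (fun s => ellipticU ω1 ω2 N x y s) t =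
        6 * ellipticU ω1 ω2 N x y t * deriv (fun v => ellipticU ω1 ω2 N x v t) y
          - deriv (deriv (deriv (fun v => ellipticU ω1 ω2 N x v t))) y := by
  classical
  set L : PeriodPair := ⟨2 * ω1, 2 * ω2, hind⟩ with hL
  have hwp : wp ω1 ω2 = L.weierstrassP := kdv_wp_eq L ω1 ω2 rfl rfl
  have hlat : ∀ z, z ∈ wlattice ω1 ω2 ↔ z ∈ L.lattice := by
    intro z
    rw [PeriodPair.mem_lattice]
    constructor
    · rintro ⟨m, n, h⟩
      exact ⟨m, n, by rw [h]; simp only [hL]; ring⟩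
    · rintro ⟨m, n, h⟩
      exact ⟨m, n, by rw [← h]; simp only [hL]; ring⟩
  simp only [hlat] at hdist ⊢
  rw [hwp, L.deriv_weierstrassP] at hlocus
  intro t ht y hy
  have hst := kdv_static L N (fun j => x j t) (hdist t ht) (hlocus t ht) y hy
  have hopen : IsOpen ((L.lattice : Set ℂ)ᶜ) := L.isClosed_lattice.isOpen_compl
  have hev : ∀ᶠ v in 𝓝 y, ∀ j, v - x j t ∉ L.lattice := by
    rw [Filter.eventually_all]
    intro j
    exact (continuous_id.sub continuous_const).continuousAt.eventually (hopen.mem_nhds (hy j))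
  have hu : ∀ v s, ellipticU ω1 ω2 N x v s = 2 * ∑ j, L.weierstrassP (v - x j s) := by
    intro v s; rw [ellipticU, hwp]
  simp only [hu]
  -- time derivative
  have hT : HasDerivAt (fun s => 2 * ∑ j, L.weierstrassP (y - x j s))
      (2 * ∑ j, (- deriv (x j) t) • L.derivWeierstrassP (y - x j t)) t := by
    refine HasDerivAt.const_mul _ (HasDerivAt.fun_sum fun j _ => ?_)
    have hx : HasDerivAt (x j) (deriv (x j) t) t :=
      ((hdiff j).differentiableAt (hI.mem_nhds ht)).hasDerivAt
    exact HasDerivAt.scomp (h := fun s => y - x j s) t (kdv_P_hasDerivAt L _ (hy j))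
      (hx.const_sub y)
  -- space derivatives
  have hX1 : ∀ v, (∀ j, v - x j t ∉ L.lattice) →
      HasDerivAt (fun v => 2 * ∑ j, L.weierstrassP (v - x j t))
        (2 * ∑ j, L.derivWeierstrassP (v - x j t)) v := fun v hv =>
    HasDerivAt.const_mul _ (HasDerivAt.fun_sum fun j _ => kdv_P_hasDerivAt' L _ _ (hv j))
  have hX2 : ∀ v, (∀ j, v - x j t ∉ L.lattice) →
      HasDerivAt (fun v => 2 * ∑ j, L.derivWeierstrassP (v - x j t))
        (2 * ∑ j, deriv L.derivWeierstrassP (v - x j t)) v := fun v hv =>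
    HasDerivAt.const_mul _ (HasDerivAt.fun_sum fun j _ =>
      (L.analyticOnNhd_derivWeierstrassP _ (hv j)).differentiableAt.hasDerivAt.comp_sub_const v _)
  have hX3 : HasDerivAt (fun v => 2 * ∑ j, deriv L.derivWeierstrassP (v - x j t))
        (2 * ∑ j, 12 * L.weierstrassP (y - x j t) * L.derivWeierstrassP (y - x j t)) y :=
    HasDerivAt.const_mul _ (HasDerivAt.fun_sum fun j _ =>
      (kdv_third L _ (hy j)).comp_sub_const y _)
  have e1 : deriv (fun v => 2 * ∑ j, L.weierstrassP (v - x j t)) =ᶠ[𝓝 y]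
      fun v => 2 * ∑ j, L.derivWeierstrassP (v - x j t) := by
    filter_upwards [hev] with v hv using (hX1 v hv).deriv
  have e2 : deriv (deriv (fun v => 2 * ∑ j, L.weierstrassP (v - x j t))) =ᶠ[𝓝 y]
      fun v => 2 * ∑ j, deriv L.derivWeierstrassP (v - x j t) := by
    refine e1.deriv.trans ?_
    filter_upwards [hev] with v hv using (hX2 v hv).deriv
  rw [hT.deriv, (hX1 y hy).deriv, e2.deriv_eq, hX3.deriv]
  have e3 : ∀ j, (- deriv (x j) t) • L.derivWeierstrassP (y - x j t) =
      12 * ((∑ i ∈ Finset.univ.erase j, L.weierstrassP (x j t - x i t))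
        * L.derivWeierstrassP (y - x j t)) := by
    intro j
    rw [hflow t ht j, hwp, smul_eq_mul]; ring
  simp only [e3, mul_assoc, ← Finset.mul_sum]
  linear_combination -24 * hst
end
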